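/- If for every multi-index α ∈ {0,1}^d there is a constant c_1 with ⟨L_α v_α, v_α⟩ ≤ c_1 ⟨(A + h^{-2} M^d) v_α, v_α⟩ for all v_α ∈ S_α, then the additive subspace correction smoother L = Σ_{α∈{0,1}^d} Q_α′ L_α Q_α satisfies ‖(I − T_c)v‖_L ≤ c ‖v‖_A for all v ∈ S^d, where T_c is the a(·,·)-orthogonal projector onto the coarse space (S_c)^d and c is independent of the mesh size h and the spline degree p (it may depend on d and c_1). -/

import Mathlib

noncomputable section

open MeasureTheory Set

namespace SplineMG

/-- The `j`-th piece of the uniform partition of `[0,1]` into `m` subintervals of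
length `h = 1/m`; the first and last pieces are extended to `-∞` resp. `+∞`
(the spline is extended polynomially outside `[0,1]`). -/
def pieceSet (m j : ℕ) : Set ℝ :=
  (if j = 0 then Iic ((1 : ℝ) / m) else Icc ((j : ℝ) / m) (((j : ℝ) + 1) / m)) ∪
  (if j = m - 1 then Ici (((m : ℝ) - 1) / m) else ∅)

/-- `u : ℝ → ℝ` belongs to the univariate spline space `S` of degree `p` and maximal
smoothness `C^{p-1}` on the uniform partition of `(0,1)` into `m` intervals of
length `h = 1/m`. -/
def IsSpline (m p : ℕ) (u : ℝ → ℝ) : Prop :=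
  ContDiffOn ℝ (p - 1 : ℕ) u (Ioo (0 : ℝ) 1) ∧
  ∀ j < m, ∃ q : Polynomial ℝ, q.natDegree ≤ p ∧ ∀ x ∈ pieceSet m j, u x = q.eval x

/-- `u` belongs to the subspace `S₀` of `S`: all odd derivatives of order `< p`
vanish at both endpoints. -/
def IsSpline0 (m p : ℕ) (u : ℝ → ℝ) : Prop :=
  IsSpline m p u ∧
  ∀ l : ℕ, 2 * l + 1 < p →
    iteratedDeriv (2 * l + 1) u 0 = 0 ∧ iteratedDeriv (2 * l + 1) u 1 = 0

/-- The `L²(0,1)` inner product. -/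
def ip0 (u v : ℝ → ℝ) : ℝ := ∫ x in Ioo (0 : ℝ) 1, u x * v x

/-- The squared `L²(0,1)` norm `‖u‖₀²`. -/
def l2normSq (u : ℝ → ℝ) : ℝ := ∫ x in Ioo (0 : ℝ) 1, u x ^ 2

/-- The `L²(0,1)` norm `‖u‖₀`. -/
def l2norm (u : ℝ → ℝ) : ℝ := Real.sqrt (l2normSq u)

/-- The squared `H¹(0,1)` seminorm `|u|₁²`. -/
def h1semiSq (u : ℝ → ℝ) : ℝ := ∫ x in Ioo (0 : ℝ) 1, deriv u x ^ 2

/-- The `H¹(0,1)` seminorm `|u|₁`. -/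
def h1semi (u : ℝ → ℝ) : ℝ := Real.sqrt (h1semiSq u)

/-- The squared full `H¹(0,1)` norm. -/
def h1normSq (u : ℝ → ℝ) : ℝ := l2normSq u + h1semiSq u

/-- `u` belongs to `S₁`, the `L²(0,1)`-orthogonal complement of `S₀` in `S`. -/
def IsSpline1 (m p : ℕ) (u : ℝ → ℝ) : Prop :=
  IsSpline m p u ∧ ∀ v, IsSpline0 m p v → ip0 u v = 0

/-- `v = Q₀ u` is the `L²(0,1)`-orthogonal projection of `u` onto `S₀`. -/
def IsL2Proj0 (m p : ℕ) (u v : ℝ → ℝ) : Prop :=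
  IsSpline0 m p v ∧ ∀ w, IsSpline0 m p w → ip0 (u - v) w = 0

/-- The component predicate: `false ↦ S₀`, `true ↦ S₁`. -/
def IsSplineC (m p : ℕ) : Bool → (ℝ → ℝ) → Prop
  | false => IsSpline0 m p
  | true => IsSpline1 m p

/-- The tensor-product spline space `S^d = S ⊗ ⋯ ⊗ S` on `(0,1)^d`. -/
def TensorSpline (d m p : ℕ) : Submodule ℝ ((Fin d → ℝ) → ℝ) :=
  Submodule.span ℝ {u | ∃ f : Fin d → ℝ → ℝ, (∀ i, IsSpline m p (f i)) ∧
    u = fun x => ∏ i, f i (x i)}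

/-- The subspace `S_α = S_{α₁} ⊗ ⋯ ⊗ S_{α_d}` of `S^d`, for `α ∈ {0,1}^d`
(`false ↦ 0`, `true ↦ 1`). -/
def TensorSplineSub (d m p : ℕ) (α : Fin d → Bool) : Submodule ℝ ((Fin d → ℝ) → ℝ) :=
  Submodule.span ℝ {u | ∃ f : Fin d → ℝ → ℝ, (∀ i, IsSplineC m p (α i) (f i)) ∧
    u = fun x => ∏ i, f i (x i)}

/-- The open unit cube `Ω = (0,1)^d`. -/
def cube (d : ℕ) : Set (Fin d → ℝ) := Set.univ.pi fun _ => Ioo (0 : ℝ) 1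

/-- The `i`-th partial derivative. -/
def pd (d : ℕ) (i : Fin d) (u : (Fin d → ℝ) → ℝ) : (Fin d → ℝ) → ℝ :=
  fun x => deriv (fun t => u (Function.update x i t)) (x i)

/-- The `L²(Ω)` inner product on the unit cube. -/
def ipd (d : ℕ) (u v : (Fin d → ℝ) → ℝ) : ℝ := ∫ x in cube d, u x * v x

/-- The squared `L²(Ω)` norm. -/
def l2normSqD (d : ℕ) (u : (Fin d → ℝ) → ℝ) : ℝ := ∫ x in cube d, u x ^ 2

/-- The bilinear form `a(u,v) = ∫_Ω (∇u·∇v + uv) dx`. -/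
def aForm (d : ℕ) (u v : (Fin d → ℝ) → ℝ) : ℝ :=
  ∫ x in cube d, (∑ i, pd d i u x * pd d i v x) + u x * v x

/-- The squared `H¹(Ω)` seminorm. -/
def h1semiSqD (d : ℕ) (u : (Fin d → ℝ) → ℝ) : ℝ :=
  ∫ x in cube d, ∑ i, pd d i u x ^ 2

/-- The squared full `H¹(Ω)` norm. -/
def h1normSqD (d : ℕ) (u : (Fin d → ℝ) → ℝ) : ℝ := l2normSqD d u + h1semiSqD d u

/-- `v = Q_α u` is the `L²(Ω)`-orthogonal projection of `u` onto `S_α`. -/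
def IsL2ProjSub (d m p : ℕ) (α : Fin d → Bool) (u v : (Fin d → ℝ) → ℝ) : Prop :=
  v ∈ TensorSplineSub d m p α ∧ ∀ w ∈ TensorSplineSub d m p α, ipd d (u - v) w = 0

/-- The coarse tensor-product spline space `(S_c)^d` (with `m/2` knot spans of
width `2h` per direction). -/
def TensorSplineCoarse (d m p : ℕ) : Submodule ℝ ((Fin d → ℝ) → ℝ) :=
  TensorSpline d (m / 2) p

/-- `v = T_c u` is the `a(·,·)`-orthogonal (Galerkin) projection of `u` onto `(S_c)^d`. -/
def IsGalerkinCoarseProj (d m p : ℕ) (u v : (Fin d → ℝ) → ℝ) : Prop :=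
  v ∈ TensorSplineCoarse d m p ∧ ∀ w ∈ TensorSplineCoarse d m p, aForm d (u - v) w = 0

end SplineMG

namespace SplineMG

/-!
The mass and stiffness forms of `S` are diagonal in a common basis, so every estimate becomes one on
weighted sums of squares of coordinates.

In one dimension, differentiation and integration are mutually inverse up to boundary terms and
skew-adjoint, so the first-order approximation power of piecewise constants passes, without loss in
the constant, from degree to degree to the spline spaces whose odd or whose even derivatives vanish
at the endpoints, in particular to `S₀`. Together with the inverse inequality on `S₀` this bounds
the projectors onto `S₀`, onto `S₁` and onto the analogue of `S₀` on the coarse mesh, in `L²` and in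
`H¹`, uniformly in `p`.

Bounds on matrices with respect to product weights are multiplicative in Kronecker products, which
makes the `Q_α` stable. With `P` the last of the three projectors, telescoping `I - P ⊗ ⋯ ⊗ P` gives
an approximation estimate for the coarse space, which by Aubin–Nitsche duality becomes
`h⁻² ‖(I - T_c) v‖² ≤ C ‖(I - T_c) v‖_A²`.
-/

/-! ### Approximation of the range of skew-adjoint operators -/

section SkewAdjoint

variable {H : Type*} [NormedAddCommGroup H] [InnerProductSpace ℝ H]

/-- The subspace `W` approximates the range of `T` with rate `h`: every `T f` is within
`h * ‖f‖` of `W`. -/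
def ApproximatesRange (T : H →ₗ[ℝ] H) (W : Submodule ℝ H) (h : ℝ) : Prop :=
  ∀ f, ∃ g ∈ W, ‖T f - g‖ ≤ h * ‖f‖

theorem ApproximatesRange.norm_apply_le_of_mem_orthogonal {T D : H →ₗ[ℝ] H}
    {W : Submodule ℝ H} {h : ℝ} (hW : ApproximatesRange T W h)
    (hTD : ∀ f g, inner ℝ (T f) g = -inner ℝ f (D g)) {r : H} (hr : r ∈ Wᗮ) :
    ‖D r‖ ≤ h * ‖r‖ := by
  obtain ⟨q, hq, hdist⟩ := hW (D r)
  have key : ‖D r‖ * ‖D r‖ ≤ ‖D r‖ * (h * ‖r‖) := calc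
    ‖D r‖ * ‖D r‖ = -inner ℝ (T (D r) - q) r := by
      rw [inner_sub_left, hTD, (W.mem_orthogonal r).1 hr q hq, real_inner_self_eq_norm_mul_norm]
      ring
    _ ≤ ‖T (D r) - q‖ * ‖r‖ := (neg_le_abs _).trans (abs_real_inner_le_norm _ _)
    _ ≤ h * ‖D r‖ * ‖r‖ := by gcongr
    _ = ‖D r‖ * (h * ‖r‖) := by ring
  rcases (norm_nonneg (D r)).eq_or_lt with hzero | hpos
  · obtain ⟨_, _, hle⟩ := hW r
    exact hzero ▸ (norm_nonneg _).trans hle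
  · exact le_of_mul_le_mul_left key hpos

theorem ApproximatesRange.map {T D : H →ₗ[ℝ] H} {W : Submodule ℝ H}
    [W.HasOrthogonalProjection] {h : ℝ} (hW : ApproximatesRange T W h) (hh : 0 ≤ h)
    (hTD : ∀ f g, inner ℝ (T f) g = -inner ℝ f (D g)) :
    ApproximatesRange D (W.map D) h := fun f => by
  refine ⟨D (W.starProjection f), Submodule.mem_map_of_mem (W.starProjection_apply_mem f), ?_⟩
  have hres := hW.norm_apply_le_of_mem_orthogonal hTD (W.sub_starProjection_mem_orthogonal f)
  have hnorm : ‖f - W.starProjection f‖ ≤ ‖f‖ := by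
    rw [← W.starProjection_orthogonal_val]
    exact Wᗮ.norm_starProjection_apply_le f
  rw [← map_sub]
  exact hres.trans (by gcongr)

/-- The spaces `T b W`, `T b (T (!b) W)`, … obtained from `W` by applying the two operators
`T true` and `T false` alternately, `n` times, the last one being `T b`. -/
def alternatingRange (T : Bool → H →ₗ[ℝ] H) (W : Submodule ℝ H) : Bool → ℕ → Submodule ℝ H
  | _, 0 => W
  | b, n + 1 => (alternatingRange T W (!b) n).map (T b)

instance (T : Bool → H →ₗ[ℝ] H) (W : Submodule ℝ H) [FiniteDimensional ℝ W] (b : Bool) (n : ℕ) :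
    FiniteDimensional ℝ (alternatingRange T W b n) := by
  induction n generalizing b with
  | zero => assumption
  | succ n ih =>
    have := ih (!b)
    exact inferInstanceAs (FiniteDimensional ℝ ((alternatingRange T W (!b) n).map (T b)))

theorem approximatesRange_alternatingRange {T : Bool → H →ₗ[ℝ] H} {W : Submodule ℝ H}
    [FiniteDimensional ℝ W] {h : ℝ} (hT : ∀ b f g, inner ℝ (T b f) g = -inner ℝ f (T (!b) g))
    (hh : 0 ≤ h) (hW : ∀ b, ApproximatesRange (T b) W h) (b : Bool) (n : ℕ) :
    ApproximatesRange (T b) (alternatingRange T W b n) h := by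
  induction n generalizing b with
  | zero => exact hW b
  | succ n ih => exact (ih (!b)).map hh (by simpa using hT (!b))

end SkewAdjoint

/-! ### The Volterra operator on `L²(0,1)` -/

/-- Lebesgue measure on the unit interval. -/
abbrev unitMeasure : Measure ℝ := volume.restrict (Ioo (0 : ℝ) 1)

/-- The Hilbert space `L²(0,1)`. -/
abbrev UnitL2 : Type := Lp ℝ 2 unitMeasure

instance : IsProbabilityMeasure unitMeasure := ⟨by simp⟩

theorem integral_unitMeasure (f : ℝ → ℝ) : ∫ x, f x ∂unitMeasure = ∫ x in (0 : ℝ)..1, f x := by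
  rw [intervalIntegral.integral_of_le zero_le_one, integral_Ioc_eq_integral_Ioo]

theorem integrable_unitMeasure_iff {f : ℝ → ℝ} :
    Integrable f unitMeasure ↔ IntervalIntegrable f volume 0 1 := by
  rw [intervalIntegrable_iff_integrableOn_Ioo_of_le zero_le_one]
  rfl

theorem memLp_unitMeasure_of_continuousOn {f : ℝ → ℝ} (hf : ContinuousOn f (Icc 0 1)) :
    MemLp f 2 unitMeasure := by
  obtain ⟨C, hC⟩ := isCompact_Icc.exists_bound_of_continuousOn hf
  refine MemLp.of_bound ?_ C ?_
  · exact (hf.mono Ioo_subset_Icc_self).aestronglyMeasurable measurableSet_Ioo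
  · exact ae_restrict_of_forall_mem measurableSet_Ioo fun x hx => hC x (Ioo_subset_Icc_self hx)

theorem UnitL2.integrable (f : UnitL2) : Integrable f unitMeasure :=
  (Lp.memLp f).integrable one_le_two

theorem UnitL2.intervalIntegrable (f : UnitL2) : IntervalIntegrable f volume 0 1 :=
  integrable_unitMeasure_iff.1 f.integrable

theorem UnitL2.inner_eq (f g : UnitL2) : inner ℝ f g = ∫ x, f x * g x ∂unitMeasure := by
  rw [L2.inner_def]
  exact integral_congr_ae (ae_of_all _ fun x => mul_comm _ _)

theorem UnitL2.norm_sq_eq (f : UnitL2) : ‖f‖ ^ 2 = ∫ x, f x ^ 2 ∂unitMeasure := by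
  rw [← real_inner_self_eq_norm_sq, UnitL2.inner_eq]
  simp only [pow_two]

/-- The primitive of `f` vanishing at `0`. -/
def primitive (f : ℝ → ℝ) (x : ℝ) : ℝ := ∫ t in (0 : ℝ)..x, f t

@[simp]
theorem primitive_zero (f : ℝ → ℝ) : primitive f 0 = 0 := intervalIntegral.integral_same

theorem primitive_one (f : ℝ → ℝ) : primitive f 1 = ∫ x, f x ∂unitMeasure :=
  (integral_unitMeasure f).symm

theorem intervalIntegrable_of_mem_Icc {f : ℝ → ℝ} (hf : IntervalIntegrable f volume 0 1)
    {x y : ℝ} (hx : x ∈ Icc (0 : ℝ) 1) (hy : y ∈ Icc (0 : ℝ) 1) :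
    IntervalIntegrable f volume x y :=
  hf.mono_set <| by
    rw [← uIcc_of_le (zero_le_one' ℝ)] at hx hy
    exact uIcc_subset_uIcc hx hy

theorem absolutelyContinuousOnInterval_primitive {f : ℝ → ℝ}
    (hf : IntervalIntegrable f volume 0 1) :
    AbsolutelyContinuousOnInterval (primitive f) 0 1 :=
  hf.absolutelyContinuousOnInterval_intervalIntegral left_mem_uIcc

theorem continuousOn_primitive {f : ℝ → ℝ} (hf : IntervalIntegrable f volume 0 1) :
    ContinuousOn (primitive f) (Icc 0 1) :=
  uIcc_of_le (zero_le_one' ℝ) ▸ (absolutelyContinuousOnInterval_primitive hf).continuousOn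

theorem deriv_primitive_ae {f : ℝ → ℝ} (hf : IntervalIntegrable f volume 0 1) :
    deriv (primitive f) =ᵐ[unitMeasure] f := by
  filter_upwards [ae_restrict_of_ae hf.ae_hasDerivAt_integral,
    ae_restrict_mem measurableSet_Ioo] with x hderiv hx
  rw [uIcc_of_le zero_le_one] at hderiv
  exact (hderiv (Ioo_subset_Icc_self hx) 0 (left_mem_Icc.2 zero_le_one)).deriv

theorem primitive_congr_ae {f g : ℝ → ℝ} (hfg : f =ᵐ[unitMeasure] g) {x : ℝ}
    (hx : x ∈ Icc (0 : ℝ) 1) : primitive f x = primitive g x := by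
  simp only [primitive, intervalIntegral.integral_of_le hx.1, integral_Ioc_eq_integral_Ioo]
  exact integral_congr_ae (ae_restrict_of_ae_restrict_of_subset (Ioo_subset_Ioo_right hx.2) hfg)

theorem primitive_add {f g : ℝ → ℝ} (hf : IntervalIntegrable f volume 0 1)
    (hg : IntervalIntegrable g volume 0 1) {x : ℝ} (hx : x ∈ Icc (0 : ℝ) 1) :
    primitive (f + g) x = primitive f x + primitive g x :=
  intervalIntegral.integral_add
    (intervalIntegrable_of_mem_Icc hf (left_mem_Icc.2 zero_le_one) hx)
    (intervalIntegrable_of_mem_Icc hg (left_mem_Icc.2 zero_le_one) hx)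

theorem primitive_const_smul (c : ℝ) (f : ℝ → ℝ) (x : ℝ) :
    primitive (c • f) x = c * primitive f x :=
  intervalIntegral.integral_const_mul c f

theorem integral_primitive_mul_add {f g : ℝ → ℝ} (hf : IntervalIntegrable f volume 0 1)
    (hg : IntervalIntegrable g volume 0 1) :
    ∫ x, primitive f x * g x ∂unitMeasure + ∫ x, f x * primitive g x ∂unitMeasure =
      primitive f 1 * primitive g 1 := by
  have hcont {u v : ℝ → ℝ} (hu : IntervalIntegrable u volume 0 1)
      (hv : IntervalIntegrable v volume 0 1) :
      Integrable (fun x => u x * primitive v x) unitMeasure :=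
    integrable_unitMeasure_iff.2 <| hu.mul_continuousOn <|
      (uIcc_of_le (zero_le_one' ℝ)).symm ▸ continuousOn_primitive hv
  rw [← integral_add (by simpa only [mul_comm] using hcont hg hf) (hcont hf hg)]
  have parts := (absolutelyContinuousOnInterval_primitive hf).integral_deriv_mul_eq_sub
    (absolutelyContinuousOnInterval_primitive hg)
  rw [primitive_zero, zero_mul, sub_zero, ← integral_unitMeasure] at parts
  rw [← parts]
  refine integral_congr_ae ?_
  filter_upwards [deriv_primitive_ae hf, deriv_primitive_ae hg] with x hfx hgx
  rw [hfx, hgx, add_comm]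

theorem memLp_primitive {f : ℝ → ℝ} (hf : IntervalIntegrable f volume 0 1) :
    MemLp (primitive f) 2 unitMeasure :=
  memLp_unitMeasure_of_continuousOn (continuousOn_primitive hf)

theorem ae_mem_Icc_unitMeasure : ∀ᵐ x ∂unitMeasure, x ∈ Icc (0 : ℝ) 1 :=
  (ae_restrict_mem measurableSet_Ioo).mono fun _ hx => Ioo_subset_Icc_self hx

/-- The Volterra integral operator `f ↦ ∫₀ˣ f` on `L²(0,1)`. -/
def volterra : UnitL2 →ₗ[ℝ] UnitL2 where
  toFun f := (memLp_primitive f.intervalIntegrable).toLp _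
  map_add' f g := by
    rw [← MemLp.toLp_add, MemLp.toLp_eq_toLp_iff]
    filter_upwards [ae_mem_Icc_unitMeasure] with x hx
    rw [primitive_congr_ae (Lp.coeFn_add f g) hx,
      primitive_add f.intervalIntegrable g.intervalIntegrable hx, Pi.add_apply]
  map_smul' c f := by
    rw [RingHom.id_apply, ← MemLp.toLp_const_smul, MemLp.toLp_eq_toLp_iff]
    filter_upwards [ae_mem_Icc_unitMeasure] with x hx
    rw [primitive_congr_ae (Lp.coeFn_smul c f) hx, primitive_const_smul]
    rfl

theorem volterra_ae (f : UnitL2) : volterra f =ᵐ[unitMeasure] primitive f :=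
  (memLp_primitive f.intervalIntegrable).coeFn_toLp

/-- The mean-zero functions in `L²(0,1)`. -/
def meanZero : Submodule ℝ UnitL2 := (ℝ ∙ (Lp.const 2 unitMeasure (1 : ℝ)))ᗮ

instance : meanZero.HasOrthogonalProjection :=
  inferInstanceAs (ℝ ∙ (Lp.const 2 unitMeasure (1 : ℝ)))ᗮ.HasOrthogonalProjection

theorem inner_const_one (f : UnitL2) :
    inner ℝ (Lp.const 2 unitMeasure (1 : ℝ)) f = ∫ x, f x ∂unitMeasure := by
  rw [UnitL2.inner_eq]
  refine integral_congr_ae ?_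
  filter_upwards [Lp.coeFn_const (p := 2) (μ := unitMeasure) (1 : ℝ)] with x hx
  rw [hx, Function.const_apply, one_mul]

theorem mem_meanZero {f : UnitL2} : f ∈ meanZero ↔ ∫ x, f x ∂unitMeasure = 0 := by
  rw [meanZero, Submodule.mem_orthogonal_singleton_iff_inner_right, inner_const_one]

theorem starProjection_meanZero (f : UnitL2) :
    meanZero.starProjection f =
      f - (∫ x, f x ∂unitMeasure) • Lp.const 2 unitMeasure (1 : ℝ) := by
  have hone : ‖Lp.const 2 unitMeasure (1 : ℝ)‖ = 1 := by
    simp [Lp.norm_const]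
  change (ℝ ∙ (Lp.const 2 unitMeasure (1 : ℝ)))ᗮ.starProjection f = _
  rw [Submodule.starProjection_orthogonal_val, Submodule.starProjection_unit_singleton ℝ hone,
    inner_const_one]

theorem starProjection_meanZero_ae (f : UnitL2) :
    meanZero.starProjection f =ᵐ[unitMeasure] fun x => f x - ∫ t, f t ∂unitMeasure := by
  rw [starProjection_meanZero]
  filter_upwards [Lp.coeFn_sub f ((∫ x, f x ∂unitMeasure) • Lp.const 2 unitMeasure (1 : ℝ)),
    Lp.coeFn_smul (∫ x, f x ∂unitMeasure) (Lp.const 2 unitMeasure (1 : ℝ)),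
    Lp.coeFn_const (p := 2) (μ := unitMeasure) (1 : ℝ)] with x hsub hsmul hconst
  rw [hsub, Pi.sub_apply, hsmul, Pi.smul_apply, hconst, Function.const_apply, smul_eq_mul, mul_one]

theorem inner_volterra_of_mem_meanZero {f : UnitL2} (hf : f ∈ meanZero) (g : UnitL2) :
    inner ℝ (volterra f) g = -inner ℝ f (volterra g) := by
  have hleft : inner ℝ (volterra f) g = ∫ x, primitive f x * g x ∂unitMeasure := by
    rw [UnitL2.inner_eq]
    exact integral_congr_ae ((volterra_ae f).mono fun x hx => by simp only [hx])
  have hright : inner ℝ f (volterra g) = ∫ x, f x * primitive g x ∂unitMeasure := by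
    rw [UnitL2.inner_eq]
    exact integral_congr_ae ((volterra_ae g).mono fun x hx => by simp only [hx])
  have parts := integral_primitive_mul_add f.intervalIntegrable g.intervalIntegrable
  rw [primitive_one f, mem_meanZero.1 hf, zero_mul, ← hleft, ← hright] at parts
  exact eq_neg_of_add_eq_zero_left parts

/-- The two operators that build spline spaces degree by degree: `true` integrates and then
subtracts the mean, `false` subtracts the mean and then integrates. Up to sign they are adjoint
to each other. -/
def meanFreeVolterra : Bool → UnitL2 →ₗ[ℝ] UnitL2
  | true => (meanZero.starProjection : UnitL2 →ₗ[ℝ] UnitL2) ∘ₗ volterra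
  | false => volterra ∘ₗ (meanZero.starProjection : UnitL2 →ₗ[ℝ] UnitL2)

theorem inner_meanFreeVolterra (b : Bool) (f g : UnitL2) :
    inner ℝ (meanFreeVolterra b f) g = -inner ℝ f (meanFreeVolterra (!b) g) := by
  have skew (f g : UnitL2) : inner ℝ (volterra (meanZero.starProjection f)) g =
      -inner ℝ f (meanZero.starProjection (volterra g)) := by
    rw [inner_volterra_of_mem_meanZero (meanZero.starProjection_apply_mem f),
      meanZero.inner_starProjection_left_eq_right]
  cases b
  · exact skew f g
  · have swapped := skew g f
    rw [real_inner_comm, real_inner_comm _ g] at swapped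
    exact (neg_eq_iff_eq_neg.2 swapped).symm

/-! ### The pieces of the uniform partition -/

section Pieces

variable {m j : ℕ} {x : ℝ}

theorem mem_pieceSet_iff (hj : j < m) :
    x ∈ pieceSet m j ↔ (j = 0 ∨ (j : ℝ) ≤ m * x) ∧ (j = m - 1 ∨ m * x ≤ (j : ℝ) + 1) := by
  have hm : (0 : ℝ) < m := by exact_mod_cast (Nat.zero_le j).trans_lt hj
  have hpred : ((m - 1 : ℕ) : ℝ) = m - 1 := Nat.cast_pred ((Nat.zero_le j).trans_lt hj)
  unfold pieceSet
  by_cases hfirst : j = 0 <;> by_cases hlast : j = m - 1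
  · obtain rfl : m = 1 := by omega
    simpa [hfirst] using (le_total x 1).imp_right zero_le_one.trans
  · rw [if_pos hfirst, if_neg hlast, union_empty, mem_Iic, le_div_iff₀ hm, mul_comm x]
    simp [hfirst, show 0 ≠ m - 1 by omega]
  · rw [if_neg hfirst, if_pos hlast, mem_union, mem_Icc, mem_Ici, ← hpred, ← hlast,
      div_le_iff₀ hm, mul_comm x]
    tauto
  · rw [if_neg hfirst, if_neg hlast, union_empty, mem_Icc, div_le_iff₀ hm, le_div_iff₀ hm,
      mul_comm x]
    simp [hfirst, hlast]

theorem Icc_subset_pieceSet (hj : j < m) :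
    Icc ((j : ℝ) / m) (((j : ℝ) + 1) / m) ⊆ pieceSet m j := fun x hx => by
  have hm : (0 : ℝ) < m := by exact_mod_cast (Nat.zero_le j).trans_lt hj
  rw [mem_Icc, div_le_iff₀' hm, le_div_iff₀' hm] at hx
  exact (mem_pieceSet_iff hj).2 ⟨.inr hx.1, .inr hx.2⟩

theorem isClosed_pieceSet (m j : ℕ) : IsClosed (pieceSet m j) := by
  unfold pieceSet
  refine IsClosed.union ?_ ?_ <;> split_ifs
  exacts [isClosed_Iic, isClosed_Icc, isClosed_Ici, isClosed_empty]

theorem ordConnected_pieceSet (hj : j < m) : OrdConnected (pieceSet m j) := by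
  refine ⟨fun x hx y hy z hz => ?_⟩
  rw [mem_pieceSet_iff hj] at hx hy ⊢
  have hxz : (m : ℝ) * x ≤ m * z := by gcongr; exact hz.1
  have hzy : (m : ℝ) * z ≤ m * y := by gcongr; exact hz.2
  exact ⟨hx.1.imp_right hxz.trans', hy.2.imp_right hzy.trans⟩

theorem uniqueDiffOn_pieceSet (hj : j < m) : UniqueDiffOn ℝ (pieceSet m j) := by
  have hm : (0 : ℝ) < m := by exact_mod_cast (Nat.zero_le j).trans_lt hj
  refine uniqueDiffOn_convex (ordConnected_pieceSet hj).convex ?_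
  refine Nonempty.mono (interior_mono (Icc_subset_pieceSet hj)) ?_
  rw [interior_Icc, nonempty_Ioo]
  gcongr
  exact lt_add_one _

/-- The index of a piece of the uniform partition into `m > 0` pieces that contains `x`. -/
def pieceIndex (m : ℕ) (x : ℝ) : ℕ := min ⌊(m : ℝ) * x⌋₊ (m - 1)

theorem pieceIndex_lt (hm : 0 < m) (x : ℝ) : pieceIndex m x < m :=
  (min_le_right _ _).trans_lt (Nat.pred_lt hm.ne')

theorem mem_pieceSet_pieceIndex (hm : 0 < m) (x : ℝ) : x ∈ pieceSet m (pieceIndex m x) := by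
  rw [mem_pieceSet_iff (pieceIndex_lt hm x)]
  constructor
  · rcases Nat.eq_zero_or_pos ⌊(m : ℝ) * x⌋₊ with hfloor | hfloor
    · simp [pieceIndex, hfloor]
    · have hpos : 0 ≤ (m : ℝ) * x := zero_le_one.trans (Nat.floor_pos.1 hfloor)
      exact .inr ((Nat.cast_le.2 (min_le_left _ _)).trans (Nat.floor_le hpos))
  · rcases le_total ⌊(m : ℝ) * x⌋₊ (m - 1) with hle | hle
    · rw [pieceIndex, min_eq_left hle]
      exact .inr (Nat.lt_floor_add_one _).le
    · exact .inl (min_eq_right hle)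

/-- The interior knots `1/m, …, (m-1)/m` of the uniform partition. -/
def knots (m : ℕ) : Set ℝ := (fun i : ℕ => (i : ℝ) / m) '' Ioo 0 m

theorem finite_knots (m : ℕ) : (knots m).Finite := (finite_Ioo 0 m).image _

theorem ae_notMem_knots (m : ℕ) : ∀ᵐ x, x ∉ knots m := (finite_knots m).countable.ae_notMem _

theorem knots_subset_Ioo (m : ℕ) : knots m ⊆ Ioo 0 1 := by
  rintro _ ⟨i, ⟨hi, him⟩, rfl⟩
  have hi' : (0 : ℝ) < i := by exact_mod_cast hi
  have him' : (i : ℝ) < m := by exact_mod_cast him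
  exact ⟨div_pos hi' (hi'.trans him'), (div_lt_one (hi'.trans him')).2 him'⟩

theorem mul_ne_of_notMem_knots (hx : x ∉ knots m) {i : ℕ} (hi : 0 < i) (him : i < m) :
    (m : ℝ) * x ≠ i := fun h => hx ⟨i, ⟨hi, him⟩, by
  have hm : (m : ℝ) ≠ 0 := by exact_mod_cast (hi.trans him).ne'
  simp only [← h]
  field_simp⟩

theorem pieceSet_mem_nhds (hj : j < m) (hx : x ∈ pieceSet m j) (hk : x ∉ knots m) :
    pieceSet m j ∈ nhds x := by
  have hcont : Continuous fun y : ℝ => (m : ℝ) * y := by fun_prop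
  have hleft : ∀ᶠ y in nhds x, j = 0 ∨ (j : ℝ) ≤ m * y := by
    rcases eq_or_ne j 0 with hfirst | hfirst
    · exact .of_forall fun _ => .inl hfirst
    have hlt : (j : ℝ) < m * x := (((mem_pieceSet_iff hj).1 hx).1.resolve_left hfirst).lt_of_ne
      (mul_ne_of_notMem_knots hk (by omega) hj).symm
    filter_upwards [hcont.continuousAt.eventually (lt_mem_nhds hlt)] with y hy using .inr hy.le
  have hright : ∀ᶠ y in nhds x, j = m - 1 ∨ (m : ℝ) * y ≤ j + 1 := by
    rcases eq_or_ne j (m - 1) with hlast | hlast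
    · exact .of_forall fun _ => .inl hlast
    have hlt : (m : ℝ) * x < j + 1 := (((mem_pieceSet_iff hj).1 hx).2.resolve_left hlast).lt_of_ne
      (by exact_mod_cast mul_ne_of_notMem_knots hk j.succ_pos (by omega))
    filter_upwards [hcont.continuousAt.eventually (gt_mem_nhds hlt)] with y hy using .inr hy.le
  filter_upwards [hleft, hright] with y h₁ h₂ using (mem_pieceSet_iff hj).2 ⟨h₁, h₂⟩

theorem pieceIndex_eq (hj : j < m) (hx : x ∈ pieceSet m j) (hk : x ∉ knots m) :
    pieceIndex m x = j := by
  rw [mem_pieceSet_iff hj] at hx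
  have hlower : j ≤ ⌊(m : ℝ) * x⌋₊ := by
    rcases hx.1 with rfl | h
    exacts [Nat.zero_le _, Nat.le_floor h]
  rcases eq_or_ne j (m - 1) with hlast | hlast
  · exact (min_eq_right (hlast ▸ hlower)).trans hlast.symm
  have hlt : (m : ℝ) * x < ((j + 1 : ℕ) : ℝ) := by
    refine lt_of_le_of_ne ?_ (mul_ne_of_notMem_knots hk j.succ_pos (by omega))
    exact_mod_cast hx.2.resolve_left hlast
  have hupper : ⌊(m : ℝ) * x⌋₊ < j + 1 := (Nat.floor_lt' j.succ_ne_zero).2 hlt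
  exact (min_eq_left (by omega)).trans (by omega)

theorem intervalIntegral_eq_sum_pieces (hm : 0 < m) {f : ℝ → ℝ}
    (hf : IntervalIntegrable f volume 0 1) :
    ∫ x in (0 : ℝ)..1, f x =
      ∑ j ∈ Finset.range m, ∫ x in (j : ℝ) / m..((j : ℝ) + 1) / m, f x := by
  have hm' : (0 : ℝ) < m := by exact_mod_cast hm
  have hmem {i : ℕ} (hi : i ≤ m) : (i : ℝ) / m ∈ Icc (0 : ℝ) 1 :=
    ⟨by positivity, (div_le_one hm').2 (by exact_mod_cast hi)⟩
  have hsum := intervalIntegral.sum_integral_adjacent_intervals (a := fun i : ℕ => (i : ℝ) / m)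
    (μ := volume) (f := f) fun j (hj : j < m) =>
      intervalIntegrable_of_mem_Icc hf (hmem hj.le) (hmem hj)
  simpa [hm'.ne'] using hsum.symm

theorem Icc_piece_subset (hj : j < m) : Icc ((j : ℝ) / m) (((j : ℝ) + 1) / m) ⊆ Icc 0 1 := by
  have hm : (0 : ℝ) < m := by exact_mod_cast (Nat.zero_le j).trans_lt hj
  exact Icc_subset_Icc (by positivity) ((div_le_one hm).2 (by exact_mod_cast hj))

end Pieces

/-! ### Approximation by step functions -/

theorem sq_integral_mul_le {α : Type*} [MeasurableSpace α] {μ : Measure α} {f g : α → ℝ}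
    (hf : MemLp f 2 μ) (hg : MemLp g 2 μ) :
    (∫ x, f x * g x ∂μ) ^ 2 ≤ (∫ x, f x ^ 2 ∂μ) * ∫ x, g x ^ 2 ∂μ := by
  have hinner {u v : α → ℝ} (hu : MemLp u 2 μ) (hv : MemLp v 2 μ) :
      inner ℝ (hu.toLp u) (hv.toLp v) = ∫ x, u x * v x ∂μ := by
    rw [L2.inner_def]
    refine integral_congr_ae ?_
    filter_upwards [hu.coeFn_toLp, hv.coeFn_toLp] with x hux hvx
    rw [hux, hvx]
    exact mul_comm _ _
  have key := real_inner_mul_inner_self_le (hf.toLp f) (hg.toLp g)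
  simpa only [hinner, pow_two] using key

section Intervals

variable {a b : ℝ} {f : ℝ → ℝ}

theorem sq_intervalIntegral_le (hab : a ≤ b) (hf : MemLp f 2 (volume.restrict (Ioc a b))) :
    (∫ x in a..b, f x) ^ 2 ≤ (b - a) * ∫ x in a..b, f x ^ 2 := by
  have key := sq_integral_mul_le (memLp_const (1 : ℝ)) hf
  simpa [intervalIntegral.integral_of_le hab, hab] using key

theorem integral_sq_integral_le (hab : a ≤ b) (hf : MemLp f 2 (volume.restrict (Ioc a b))) :
    ∫ x in a..b, (∫ t in a..x, f t) ^ 2 ≤ (b - a) ^ 2 * ∫ t in a..b, f t ^ 2 := by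
  have hint : IntegrableOn f (uIcc a b) := by
    rw [uIcc_of_le hab, integrableOn_Icc_iff_integrableOn_Ioc]
    exact hf.integrable one_le_two
  have hsq : IntervalIntegrable (fun t => f t ^ 2) volume a b :=
    (intervalIntegrable_iff_integrableOn_Ioc_of_le hab).2 hf.integrable_sq
  have hbound : ∀ x ∈ Icc a b, (∫ t in a..x, f t) ^ 2 ≤ (b - a) * ∫ t in a..b, f t ^ 2 := by
    intro x hx
    have hmono : ∫ t in a..x, f t ^ 2 ≤ ∫ t in a..b, f t ^ 2 :=
      intervalIntegral.integral_mono_interval le_rfl hx.1 hx.2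
        (ae_of_all _ fun t => sq_nonneg (f t)) hsq
    have hnonneg : 0 ≤ ∫ t in a..x, f t ^ 2 :=
      intervalIntegral.integral_nonneg hx.1 fun t _ => sq_nonneg (f t)
    calc (∫ t in a..x, f t) ^ 2
        ≤ (x - a) * ∫ t in a..x, f t ^ 2 := sq_intervalIntegral_le hx.1
          (hf.mono_measure (Measure.restrict_mono (Ioc_subset_Ioc_right hx.2) le_rfl))
      _ ≤ (b - a) * ∫ t in a..b, f t ^ 2 :=
          mul_le_mul (by linarith [hx.2]) hmono hnonneg (sub_nonneg.2 hab)
  calc ∫ x in a..b, (∫ t in a..x, f t) ^ 2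
      ≤ ∫ _ in a..b, (b - a) * ∫ t in a..b, f t ^ 2 :=
        intervalIntegral.integral_mono_on hab
          ((intervalIntegral.continuousOn_primitive_interval hint).pow 2).intervalIntegrable
          intervalIntegrable_const hbound
    _ = (b - a) ^ 2 * ∫ t in a..b, f t ^ 2 := by
        rw [intervalIntegral.integral_const, smul_eq_mul]
        ring

end Intervals

section StepFunctions

variable {m : ℕ}

/-- The step function on `ℝ` with value `c j` on the `j`-th piece. -/
def stepFun (hm : 0 < m) (c : Fin m → ℝ) (x : ℝ) : ℝ := c ⟨pieceIndex m x, pieceIndex_lt hm x⟩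

theorem measurable_stepFun (hm : 0 < m) (c : Fin m → ℝ) : Measurable (stepFun hm c) := by
  have hindex : Measurable fun x => (⟨pieceIndex m x, pieceIndex_lt hm x⟩ : Fin m) :=
    measurable_to_countable' fun j => by
      have hfloor : Measurable (pieceIndex m) :=
        (measurable_id.const_mul (m : ℝ)).nat_floor.min measurable_const
      simpa only [preimage, mem_singleton_iff, Fin.ext_iff] using
        hfloor (measurableSet_singleton (j : ℕ))
  exact (measurable_of_countable c).comp hindex

theorem norm_stepFun_le (hm : 0 < m) (c : Fin m → ℝ) (x : ℝ) : ‖stepFun hm c x‖ ≤ ‖c‖ :=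
  norm_le_pi_norm c _

theorem stepFun_eq (hm : 0 < m) (c : Fin m → ℝ) (j : Fin m) {x : ℝ} (hx : x ∈ pieceSet m j)
    (hk : x ∉ knots m) : stepFun hm c x = c j :=
  congrArg c (Fin.ext (pieceIndex_eq j.2 hx hk))

theorem memLp_stepFun (hm : 0 < m) (c : Fin m → ℝ) : MemLp (stepFun hm c) 2 unitMeasure :=
  .of_bound (measurable_stepFun hm c).aestronglyMeasurable _ (ae_of_all _ (norm_stepFun_le hm c))

theorem intervalIntegrable_stepFun (hm : 0 < m) (c : Fin m → ℝ) (a b : ℝ) :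
    IntervalIntegrable (stepFun hm c) volume a b :=
  intervalIntegrable_iff.2 <| Measure.integrableOn_of_bounded (by simp [uIoc])
    (measurable_stepFun hm c).aestronglyMeasurable (ae_of_all _ (norm_stepFun_le hm c))

/-- The step functions on the uniform partition, as elements of `L²(0,1)`. -/
def stepLp (hm : 0 < m) : (Fin m → ℝ) →ₗ[ℝ] UnitL2 where
  toFun c := (memLp_stepFun hm c).toLp _
  map_add' b c := MemLp.toLp_add (memLp_stepFun hm b) (memLp_stepFun hm c)
  map_smul' _ c := MemLp.toLp_const_smul _ (memLp_stepFun hm c)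

theorem stepLp_ae (hm : 0 < m) (c : Fin m → ℝ) : stepLp hm c =ᵐ[unitMeasure] stepFun hm c :=
  (memLp_stepFun hm c).coeFn_toLp

theorem const_mem_range_stepLp (hm : 0 < m) (a : ℝ) :
    a • Lp.const 2 unitMeasure (1 : ℝ) ∈ LinearMap.range (stepLp hm) := by
  refine Submodule.smul_mem _ a ⟨fun _ => 1, ?_⟩
  refine Lp.ext ((stepLp_ae hm _).trans ?_)
  exact (Lp.coeFn_const (p := 2) (μ := unitMeasure) (1 : ℝ)).symm

theorem starProjection_meanZero_mem_range_stepLp (hm : 0 < m) {f : UnitL2}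
    (hf : f ∈ LinearMap.range (stepLp hm)) :
    meanZero.starProjection f ∈ LinearMap.range (stepLp hm) := by
  rw [starProjection_meanZero]
  exact Submodule.sub_mem _ hf (const_mem_range_stepLp hm _)

theorem integral_sq_primitive_sub_stepFun_le (hm : 0 < m) {f : ℝ → ℝ}
    (hf : MemLp f 2 unitMeasure) :
    ∫ x in (0 : ℝ)..1, (primitive f x - stepFun hm (fun j => primitive f (j / m)) x) ^ 2 ≤
      (1 / (m : ℝ)) ^ 2 * ∫ x in (0 : ℝ)..1, f x ^ 2 := by
  have hfi : IntervalIntegrable f volume 0 1 :=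
    integrable_unitMeasure_iff.1 (hf.integrable one_le_two)
  have hdiff : IntervalIntegrable
      (fun x => (primitive f x - stepFun hm (fun j => primitive f (j / m)) x) ^ 2) volume 0 1 :=
    integrable_unitMeasure_iff.1 ((memLp_primitive hfi).sub (memLp_stepFun hm _)).integrable_sq
  rw [intervalIntegral_eq_sum_pieces hm hdiff,
    intervalIntegral_eq_sum_pieces hm (integrable_unitMeasure_iff.1 hf.integrable_sq),
    Finset.mul_sum]
  refine Finset.sum_le_sum fun j hj => ?_
  have hjm := Finset.mem_range.1 hj
  have hsub := Icc_piece_subset hjm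
  have hle : (j : ℝ) / m ≤ ((j : ℝ) + 1) / m := by gcongr; exact le_add_of_nonneg_right zero_le_one
  have hpiece : MemLp f 2 (volume.restrict (Ioc ((j : ℝ) / m) (((j : ℝ) + 1) / m))) := by
    rw [← restrict_Ioo_eq_restrict_Ioc]
    exact hf.mono_measure (Measure.restrict_mono
      (Ioo_subset_Ioo (hsub (left_mem_Icc.2 hle)).1 (hsub (right_mem_Icc.2 hle)).2) le_rfl)
  calc ∫ x in (j : ℝ) / m..((j : ℝ) + 1) / m,
          (primitive f x - stepFun hm (fun j => primitive f (j / m)) x) ^ 2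
      = ∫ x in (j : ℝ) / m..((j : ℝ) + 1) / m, (∫ t in (j : ℝ) / m..x, f t) ^ 2 := by
        refine intervalIntegral.integral_congr_ae ?_
        filter_upwards [ae_notMem_knots m] with x hk hx
        rw [uIoc_of_le hle] at hx
        have hx' := Ioc_subset_Icc_self hx
        rw [stepFun_eq hm _ ⟨j, hjm⟩ (Icc_subset_pieceSet hjm hx') hk, primitive, primitive,
          intervalIntegral.integral_interval_sub_left] <;>
        exact intervalIntegrable_of_mem_Icc hfi (left_mem_Icc.2 zero_le_one)
          (hsub (by simp [hx', hle]))
    _ ≤ (((j : ℝ) + 1) / m - j / m) ^ 2 * ∫ t in (j : ℝ) / m..((j : ℝ) + 1) / m, f t ^ 2 :=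
        integral_sq_integral_le hle hpiece
    _ = (1 / (m : ℝ)) ^ 2 * ∫ t in (j : ℝ) / m..((j : ℝ) + 1) / m, f t ^ 2 := by
        rw [← sub_div, add_sub_cancel_left]

theorem approximatesRange_volterra_stepLp (hm : 0 < m) :
    ApproximatesRange volterra (LinearMap.range (stepLp hm)) (1 / m) := fun f => by
  refine ⟨_, ⟨fun j => primitive f (j / m), rfl⟩, ?_⟩
  refine le_of_sq_le_sq ?_ (by positivity)
  rw [mul_pow, UnitL2.norm_sq_eq, UnitL2.norm_sq_eq]
  calc ∫ x, (volterra f - stepLp hm fun j => primitive f (j / m) : UnitL2) x ^ 2 ∂unitMeasure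
      = ∫ x, (primitive f x - stepFun hm (fun j => primitive f (j / m)) x) ^ 2 ∂unitMeasure := by
        refine integral_congr_ae ?_
        filter_upwards [Lp.coeFn_sub (volterra f) (stepLp hm fun j => primitive f (j / m)),
          volterra_ae f, stepLp_ae hm fun j => primitive f (j / m)] with x hsub hvolterra hstep
        rw [hsub, Pi.sub_apply, hvolterra, hstep]
    _ ≤ (1 / (m : ℝ)) ^ 2 * ∫ x, f x ^ 2 ∂unitMeasure := by
        rw [integral_unitMeasure, integral_unitMeasure]
        exact integral_sq_primitive_sub_stepFun_le hm (Lp.memLp f)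

theorem approximatesRange_meanFreeVolterra_stepLp (hm : 0 < m) (b : Bool) :
    ApproximatesRange (meanFreeVolterra b) (LinearMap.range (stepLp hm)) (1 / m) := fun f => by
  cases b
  · obtain ⟨g, hg, hle⟩ := approximatesRange_volterra_stepLp hm (meanZero.starProjection f)
    refine ⟨g, hg, hle.trans ?_⟩
    gcongr
    exact meanZero.norm_starProjection_apply_le f
  · obtain ⟨g, hg, hle⟩ := approximatesRange_volterra_stepLp hm f
    refine ⟨meanZero.starProjection g, starProjection_meanZero_mem_range_stepLp hm hg, ?_⟩
    calc ‖meanZero.starProjection (volterra f) - meanZero.starProjection g‖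
        ≤ ‖volterra f - g‖ := by
          rw [← map_sub]
          exact meanZero.norm_starProjection_apply_le _
      _ ≤ 1 / m * ‖f‖ := hle

end StepFunctions

/-! ### Regularity of splines -/

namespace IsSpline

variable {m p : ℕ} {u v : ℝ → ℝ}

theorem continuous (hm : 0 < m) (hu : IsSpline m p u) : Continuous u := by
  have hfinite : LocallyFinite fun j : Fin m => pieceSet m j := locallyFinite_of_finite _
  refine hfinite.continuous ?_ (fun j => isClosed_pieceSet m j) fun j => ?_
  · exact eq_univ_of_forall fun x =>
      mem_iUnion.2 ⟨⟨pieceIndex m x, pieceIndex_lt hm x⟩, mem_pieceSet_pieceIndex hm x⟩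
  · obtain ⟨q, -, hq⟩ := hu.2 j j.2
    exact q.continuous.continuousOn.congr hq

theorem exists_eventuallyEq (hm : 0 < m) (hu : IsSpline m p u) {x : ℝ} (hx : x ∉ knots m) :
    ∃ q : Polynomial ℝ, u =ᶠ[nhds x] fun y => q.eval y := by
  obtain ⟨q, -, hq⟩ := hu.2 _ (pieceIndex_lt hm x)
  refine ⟨q, ?_⟩
  filter_upwards [pieceSet_mem_nhds (pieceIndex_lt hm x) (mem_pieceSet_pieceIndex hm x) hx]
    with y hy using hq y hy

theorem contDiffAt (hm : 0 < m) (hu : IsSpline m p u) {x : ℝ} (hx : x ∉ knots m) (n : ℕ) :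
    ContDiffAt ℝ n u x := by
  obtain ⟨q, hq⟩ := hu.exists_eventuallyEq hm hx
  have hpoly : ContDiff ℝ n fun y => q.eval y := by simpa using q.contDiff_aeval (𝕜 := ℝ) n
  exact hpoly.contDiffAt.congr_of_eventuallyEq hq

theorem hasDerivAt (hm : 0 < m) (hu : IsSpline m p u) {x : ℝ} (hx : x ∉ knots m) :
    HasDerivAt u (deriv u x) x :=
  ((hu.contDiffAt hm hx 1).differentiableAt (by simp)).hasDerivAt

theorem memLp (hm : 0 < m) (hu : IsSpline m p u) : MemLp u 2 unitMeasure :=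
  memLp_unitMeasure_of_continuousOn (hu.continuous hm).continuousOn

theorem deriv_eq {j : ℕ} (hj : j < m) {q : Polynomial ℝ}
    (hq : ∀ x ∈ pieceSet m j, u x = q.eval x) {x : ℝ} (hx : x ∈ pieceSet m j)
    (hdiff : DifferentiableAt ℝ u x) : deriv u x = q.derivative.eval x :=
  (uniqueDiffOn_pieceSet hj x hx).eq_deriv _ hdiff.hasDerivAt.hasDerivWithinAt
    ((q.hasDerivAt x).hasDerivWithinAt.congr hq (hq x hx))

theorem memLp_deriv (hm : 0 < m) (hu : IsSpline m p u) : MemLp (deriv u) 2 unitMeasure := by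
  choose! q _ hq using hu.2
  have hbound (j : ℕ) : ∃ C, ∀ x ∈ Icc (0 : ℝ) 1, ‖(q j).derivative.eval x‖ ≤ C :=
    isCompact_Icc.exists_bound_of_continuousOn (q j).derivative.continuous.continuousOn
  choose C hC using hbound
  refine .of_bound (measurable_deriv u).aestronglyMeasurable (∑ j ∈ Finset.range m, C j) ?_
  filter_upwards [ae_restrict_of_ae (ae_notMem_knots m), ae_mem_Icc_unitMeasure] with x hk hx
  have hj := pieceIndex_lt hm x
  rw [deriv_eq hj (hq _ hj) (mem_pieceSet_pieceIndex hm x) (hu.hasDerivAt hm hk).differentiableAt]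
  exact (hC _ x hx).trans <| Finset.single_le_sum (f := C)
    (fun i _ => (norm_nonneg _).trans (hC i x hx)) (Finset.mem_range.2 hj)

theorem eq_add_primitive_deriv (hm : 0 < m) (hu : IsSpline m p u) {x : ℝ}
    (hx : x ∈ Icc (0 : ℝ) 1) : u x = u 0 + primitive (deriv u) x := by
  have hint := integrable_unitMeasure_iff.1 ((hu.memLp_deriv hm).integrable one_le_two)
  rw [primitive, integral_eq_of_hasDerivAt_off_countable u (deriv u) (finite_knots m).countable
    (hu.continuous hm).continuousOn (fun t ht => hu.hasDerivAt hm ht.2)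
    (intervalIntegrable_of_mem_Icc hint (left_mem_Icc.2 zero_le_one) hx)]
  ring

theorem integral_deriv_mul (hm : 0 < m) {p' : ℕ} (hu : IsSpline m p u) (hv : IsSpline m p' v)
    (hzero : u 0 * v 0 = 0) (hone : u 1 * v 1 = 0) :
    ∫ x, deriv u x * v x ∂unitMeasure = -∫ x, u x * deriv v x ∂unitMeasure := by
  have hleft : Integrable (fun x => deriv u x * v x) unitMeasure :=
    (hu.memLp_deriv hm).integrable_mul (hv.memLp hm)
  have hright : Integrable (fun x => u x * deriv v x) unitMeasure :=
    (hu.memLp hm).integrable_mul (hv.memLp_deriv hm)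
  have parts := integral_eq_of_hasDerivAt_off_countable (fun x => u x * v x)
    (fun x => deriv u x * v x + u x * deriv v x) (finite_knots m).countable
    ((hu.continuous hm).mul (hv.continuous hm)).continuousOn
    (fun t ht => (hu.hasDerivAt hm ht.2).mul (hv.hasDerivAt hm ht.2))
    (integrable_unitMeasure_iff.1 (hleft.add hright))
  rw [← integral_unitMeasure, integral_add hleft hright, hone, hzero, sub_zero] at parts
  exact eq_neg_of_add_eq_zero_left parts

theorem differentiable (hm : 0 < m) (hu : IsSpline m (p + 2) u) : Differentiable ℝ u := fun x => by
  by_cases hk : x ∈ knots m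
  · have hx := knots_subset_Ioo m hk
    exact (hu.1.differentiableOn (by simp) x hx).differentiableAt (isOpen_Ioo.mem_nhds hx)
  · exact (hu.hasDerivAt hm hk).differentiableAt

theorem isSpline_deriv (hm : 0 < m) (hu : IsSpline m (p + 2) u) :
    IsSpline m (p + 1) (deriv u) := by
  have hsmooth : ContDiffOn ℝ ((p : ℕ) + 1 : WithTop ℕ∞) u (Ioo 0 1) := by simpa using hu.1
  rw [contDiffOn_succ_iff_deriv_of_isOpen isOpen_Ioo] at hsmooth
  refine ⟨by simpa using hsmooth.2.2, fun j hj => ?_⟩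
  obtain ⟨q, hdeg, hq⟩ := hu.2 j hj
  exact ⟨q.derivative, (Polynomial.natDegree_derivative_le q).trans (by omega),
    fun x hx => deriv_eq hj hq hx (hu.differentiable hm x)⟩

theorem add_const (hu : IsSpline m p u) (c : ℝ) : IsSpline m p fun x => u x + c := by
  refine ⟨hu.1.add contDiffOn_const, fun j hj => ?_⟩
  obtain ⟨q, hdeg, hq⟩ := hu.2 j hj
  exact ⟨q + Polynomial.C c, Polynomial.natDegree_add_C.trans_le hdeg,
    fun x hx => by simp [hq x hx]⟩

end IsSpline

/-! ### Integration of splines -/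

section Primitive

variable {m p : ℕ} {u : ℝ → ℝ}

theorem exists_derivative_eq (q : Polynomial ℝ) :
    ∃ Q : Polynomial ℝ, Q.natDegree ≤ q.natDegree + 1 ∧ Q.derivative = q := by
  refine ⟨∑ n ∈ Finset.range (q.natDegree + 1), .monomial (n + 1) (q.coeff n / (n + 1)), ?_, ?_⟩
  · refine Polynomial.natDegree_sum_le_of_forall_le _ _ fun n hn => ?_
    exact (Polynomial.natDegree_monomial_le _).trans (Finset.mem_range.1 hn)
  · conv_rhs => rw [q.as_sum_range]
    rw [Polynomial.derivative_sum]
    refine Finset.sum_congr rfl fun n _ => ?_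
    rw [Polynomial.derivative_monomial, Nat.add_sub_cancel, Nat.cast_succ,
      div_mul_cancel₀ _ n.cast_add_one_ne_zero]

theorem exists_primitive_eq_eval {j : ℕ} (hj : j < m) {f : ℝ → ℝ}
    (hf : ∀ a b, IntervalIntegrable f volume a b) {q : Polynomial ℝ}
    (hq : ∀ᵐ x, x ∈ pieceSet m j → f x = q.eval x) :
    ∃ Q : Polynomial ℝ, Q.natDegree ≤ q.natDegree + 1 ∧
      ∀ x ∈ pieceSet m j, primitive f x = Q.eval x := by
  obtain ⟨Q, hdeg, hQ⟩ := exists_derivative_eq q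
  set a : ℝ := j / m
  have ha : a ∈ pieceSet m j := Icc_subset_pieceSet hj <| left_mem_Icc.2 <| by
    gcongr
    exact le_add_of_nonneg_right zero_le_one
  refine ⟨Q + Polynomial.C (primitive f a - Q.eval a), Polynomial.natDegree_add_C.trans_le hdeg,
    fun x hx => ?_⟩
  have hpoly : ∫ t in a..x, f t = ∫ t in a..x, q.eval t := by
    refine intervalIntegral.integral_congr_ae ?_
    filter_upwards [hq] with t ht hmem
    exact ht ((ordConnected_pieceSet hj).uIcc_subset ha hx (uIoc_subset_uIcc hmem))
  have hftc : ∫ t in a..x, q.eval t = Q.eval x - Q.eval a :=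
    intervalIntegral.integral_eq_sub_of_hasDerivAt (fun t _ => hQ ▸ Q.hasDerivAt t)
      (q.continuous.intervalIntegrable _ _)
  rw [primitive, ← intervalIntegral.integral_add_adjacent_intervals (hf 0 a) (hf a x), hpoly, hftc]
  simp only [primitive, Polynomial.eval_add, Polynomial.eval_C]
  ring

theorem isSpline_primitive_stepFun (hm : 0 < m) (c : Fin m → ℝ) :
    IsSpline m 1 (primitive (stepFun hm c)) := by
  have hint := intervalIntegrable_stepFun hm c
  refine ⟨contDiffOn_zero.2 (intervalIntegral.continuous_primitive hint 0).continuousOn,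
    fun j hj => ?_⟩
  have hconst : ∀ᵐ x, x ∈ pieceSet m j →
      stepFun hm c x = (Polynomial.C (c ⟨j, hj⟩)).eval x := by
    filter_upwards [ae_notMem_knots m] with x hk hx
    rw [stepFun_eq hm c ⟨j, hj⟩ hx hk, Polynomial.eval_C]
  simpa using exists_primitive_eq_eval hj hint hconst

theorem hasDerivAt_primitive (hu : Continuous u) (x : ℝ) : HasDerivAt (primitive u) (u x) x :=
  intervalIntegral.integral_hasDerivAt_right (hu.intervalIntegrable _ _)
    (hu.stronglyMeasurableAtFilter _ _) hu.continuousAt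

theorem deriv_primitive (hu : Continuous u) : deriv (primitive u) = u :=
  funext fun x => (hasDerivAt_primitive hu x).deriv

theorem IsSpline.isSpline_primitive (hm : 0 < m) (hu : IsSpline m (p + 1) u) :
    IsSpline m (p + 2) (primitive u) := by
  have hcont := hu.continuous hm
  constructor
  · have hsmooth : ContDiffOn ℝ ((p : ℕ) + 1 : WithTop ℕ∞) (primitive u) (Ioo 0 1) := by
      rw [contDiffOn_succ_iff_deriv_of_isOpen isOpen_Ioo, deriv_primitive hcont]
      exact ⟨fun x _ => (hasDerivAt_primitive hcont x).differentiableAt.differentiableWithinAt,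
        by simp, by simpa using hu.1⟩
    simpa using hsmooth
  · intro j hj
    obtain ⟨q, hdeg, hq⟩ := hu.2 j hj
    obtain ⟨Q, hQdeg, hQ⟩ := exists_primitive_eq_eval hj hcont.intervalIntegrable (.of_forall hq)
    exact ⟨Q, hQdeg.trans (by omega), hQ⟩

end Primitive

/-! ### Splines with vanishing even or odd derivatives at the endpoints -/

/-- Splines whose derivatives of odd (`b = true`) or even (`b = false`) order less than `p` vanish
at both endpoints. For `b = true` this is the space `S₀`. -/
def IsParitySpline (m p : ℕ) (b : Bool) (u : ℝ → ℝ) : Prop :=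
  IsSpline m p u ∧ ∀ k < p, k.bodd = b → iteratedDeriv k u 0 = 0 ∧ iteratedDeriv k u 1 = 0

theorem isParitySpline_true_iff {m p : ℕ} {u : ℝ → ℝ} :
    IsParitySpline m p true u ↔ IsSpline0 m p u := by
  refine and_congr_right fun _ => ⟨fun h l hl => h _ hl (by simp), fun h k hk hodd => ?_⟩
  have hkl : 2 * k.div2 + 1 = k := by simpa [hodd, add_comm] using k.bodd_add_div2
  simpa only [hkl] using h k.div2 (by omega)

namespace IsParitySpline

variable {m p : ℕ} {b : Bool} {u : ℝ → ℝ}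

theorem isParitySpline_deriv (hm : 0 < m) (hu : IsParitySpline m (p + 2) b u) :
    IsParitySpline m (p + 1) (!b) (deriv u) := by
  refine ⟨hu.1.isSpline_deriv hm, fun k hk hkb => ?_⟩
  rw [← iteratedDeriv_succ']
  exact hu.2 (k + 1) (by omega) (by simp [hkb])

theorem isParitySpline_primitive (hm : 0 < m) (hu : IsParitySpline m (p + 1) b u)
    (hmean : b = true → primitive u 1 = 0) : IsParitySpline m (p + 2) (!b) (primitive u) := by
  refine ⟨hu.1.isSpline_primitive hm, fun k hk hkb => ?_⟩
  cases k with
  | zero => simpa using hmean (by simpa using hkb.symm)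
  | succ k =>
    rw [iteratedDeriv_succ', deriv_primitive (hu.1.continuous hm)]
    exact hu.2 k (by omega) (by simpa using hkb)

theorem add_const (hu : IsParitySpline m p true u) (c : ℝ) :
    IsParitySpline m p true fun x => u x + c := by
  refine ⟨hu.1.add_const c, fun k hk hodd => ?_⟩
  cases k with
  | zero => simp at hodd
  | succ k =>
    rw [iteratedDeriv_succ', show deriv (fun x => u x + c) = deriv u by ext x; simp,
      ← iteratedDeriv_succ']
    exact hu.2 (k + 1) hk hodd

theorem mul_deriv_eq_zero (hu : IsParitySpline m (p + 2) b u) :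
    u 0 * deriv u 0 = 0 ∧ u 1 * deriv u 1 = 0 := by
  cases b
  · have hval := hu.2 0 (by omega) rfl
    rw [iteratedDeriv_zero] at hval
    simp [hval]
  · have hval := hu.2 1 (by omega) rfl
    rw [iteratedDeriv_one] at hval
    simp [hval]

end IsParitySpline

section Representation

variable {m : ℕ}

theorem starProjection_meanZero_mem_alternatingRange (hm : 0 < m) (p : ℕ) {f : UnitL2}
    (hf : f ∈ alternatingRange meanFreeVolterra (LinearMap.range (stepLp hm)) true p) :
    meanZero.starProjection f ∈
      alternatingRange meanFreeVolterra (LinearMap.range (stepLp hm)) true p := by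
  cases p with
  | zero => exact starProjection_meanZero_mem_range_stepLp hm hf
  | succ p =>
    obtain ⟨g, -, rfl⟩ := id hf
    have hmem : meanFreeVolterra true g ∈ meanZero := meanZero.starProjection_apply_mem _
    rwa [Submodule.starProjection_eq_self_iff.2 hmem]

theorem exists_isParitySpline_primitive_stepLp (hm : 0 < m) {b : Bool} (c : Fin m → ℝ)
    (hmean : b = true → primitive (stepLp hm c) 1 = 0) :
    ∃ G, IsParitySpline m 1 (!b) G ∧ EqOn (primitive (stepLp hm c)) G (Icc 0 1) := by
  have hprim : EqOn (primitive (stepLp hm c)) (primitive (stepFun hm c)) (Icc 0 1) :=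
    fun _ hx => primitive_congr_ae (stepLp_ae hm c) hx
  refine ⟨primitive (stepFun hm c), ⟨isSpline_primitive_stepFun hm c, fun k hk hkb => ?_⟩, hprim⟩
  obtain rfl : k = 0 := by omega
  rw [iteratedDeriv_zero, ← hprim (right_mem_Icc.2 zero_le_one)]
  exact ⟨primitive_zero _, hmean (by simpa using hkb.symm)⟩

theorem exists_isParitySpline_primitive (hm : 0 < m) (p : ℕ) {b : Bool} {g : UnitL2}
    (hg : g ∈ alternatingRange meanFreeVolterra (LinearMap.range (stepLp hm)) b p)
    (hmean : b = true → primitive g 1 = 0) :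
    ∃ G, IsParitySpline m (p + 1) (!b) G ∧ EqOn (primitive g) G (Icc 0 1) := by
  induction p generalizing b g with
  | zero =>
    obtain ⟨c, rfl⟩ := hg
    exact exists_isParitySpline_primitive_stepLp hm c hmean
  | succ p ih =>
    suffices ∃ F, IsParitySpline m (p + 1) b F ∧ g =ᵐ[unitMeasure] F by
      obtain ⟨F, hF, hgF⟩ := this
      have hprim : EqOn (primitive g) (primitive F) (Icc 0 1) :=
        fun _ hx => primitive_congr_ae hgF hx
      exact ⟨_, hF.isParitySpline_primitive hm fun hb =>
        hprim (right_mem_Icc.2 zero_le_one) ▸ hmean hb, hprim⟩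
    obtain ⟨f, hf, rfl⟩ := hg
    cases b with
    | true =>
      obtain ⟨F, hF, hfF⟩ := ih hf (by simp)
      refine ⟨_, hF.add_const (-∫ x, volterra f x ∂unitMeasure), ?_⟩
      filter_upwards [starProjection_meanZero_ae (volterra f), volterra_ae f,
        ae_mem_Icc_unitMeasure] with x hproj hvolterra hx
      rw [← hfF hx, ← hvolterra, ← sub_eq_add_neg]
      exact hproj
    | false =>
      obtain ⟨F, hF, hfF⟩ := ih (starProjection_meanZero_mem_alternatingRange hm p hf) fun _ => by
        rw [primitive_one, ← mem_meanZero]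
        exact meanZero.starProjection_apply_mem f
      refine ⟨F, hF, ?_⟩
      filter_upwards [volterra_ae (meanZero.starProjection f), ae_mem_Icc_unitMeasure]
        with x hvolterra hx
      exact hvolterra.trans (hfF hx)

end Representation

/-! ### Approximation by `S₀` and the inverse inequality on `S₀` -/

section Approximation

variable {m : ℕ}

theorem meanFreeVolterra_true_ae (f : UnitL2) :
    meanFreeVolterra true f =ᵐ[unitMeasure]
      fun x => primitive f x - ∫ t, volterra f t ∂unitMeasure := by
  filter_upwards [starProjection_meanZero_ae (volterra f), volterra_ae f] with x hproj hvolterra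
  exact hproj.trans (by rw [hvolterra])

theorem exists_mem_alternatingRange_norm_meanFreeVolterra_le (hm : 0 < m) (p : ℕ) (f : UnitL2) :
    ∃ g ∈ alternatingRange meanFreeVolterra (LinearMap.range (stepLp hm)) false p,
      inner ℝ g (f - g) = 0 ∧ ‖meanFreeVolterra true (f - g)‖ ≤ 1 / m * ‖f - g‖ := by
  set W := alternatingRange meanFreeVolterra (LinearMap.range (stepLp hm)) false p
  have hmem : W.starProjection f ∈ W := W.starProjection_apply_mem f
  have hres : f - W.starProjection f ∈ Wᗮ := W.sub_starProjection_mem_orthogonal f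
  have hW : ApproximatesRange (meanFreeVolterra false) W (1 / m) :=
    approximatesRange_alternatingRange inner_meanFreeVolterra (by positivity)
      (approximatesRange_meanFreeVolterra_stepLp hm) false p
  exact ⟨_, hmem, (W.mem_orthogonal _).1 hres _ hmem,
    hW.norm_apply_le_of_mem_orthogonal (inner_meanFreeVolterra false) hres⟩

theorem exists_isSpline0_deriv_ae_eq (hm : 0 < m) {p : ℕ} {g : UnitL2}
    (hg : g ∈ alternatingRange meanFreeVolterra (LinearMap.range (stepLp hm)) false p) (c : ℝ) :
    ∃ w, IsSpline0 m (p + 1) w ∧ deriv w =ᵐ[unitMeasure] g ∧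
      ∀ x ∈ Icc (0 : ℝ) 1, w x = primitive g x + c := by
  obtain ⟨G, hG, hgG⟩ := exists_isParitySpline_primitive hm p hg (by simp)
  refine ⟨_, isParitySpline_true_iff.1 (hG.add_const c), ?_, fun x hx => by rw [hgG hx]⟩
  filter_upwards [deriv_primitive_ae g.intervalIntegrable, ae_restrict_mem measurableSet_Ioo]
    with x hx hmem
  have hlocal : primitive g =ᶠ[nhds x] G := by
    filter_upwards [isOpen_Ioo.mem_nhds hmem] with y hy using hgG (Ioo_subset_Icc_self hy)
  rw [← hx, hlocal.deriv_eq, deriv_add_const]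

theorem exists_isSpline0_approx (hm : 0 < m) (p : ℕ) {u u' : ℝ → ℝ}
    (hu' : MemLp u' 2 unitMeasure) (hu : ∀ x ∈ Icc (0 : ℝ) 1, u x = u 0 + primitive u' x) :
    ∃ w, IsSpline0 m (p + 1) w ∧ ∫ x, deriv w x * (u' x - deriv w x) ∂unitMeasure = 0 ∧
      ∫ x, (u x - w x) ^ 2 ∂unitMeasure ≤
        (1 / (m : ℝ)) ^ 2 * ∫ x, (u' x - deriv w x) ^ 2 ∂unitMeasure := by
  set f : UnitL2 := hu'.toLp u'
  obtain ⟨g, hg, horth, hle⟩ := exists_mem_alternatingRange_norm_meanFreeVolterra_le hm p f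
  obtain ⟨w, hw, hderiv, hwg⟩ := exists_isSpline0_deriv_ae_eq hm hg
    (u 0 + ∫ t, volterra (f - g) t ∂unitMeasure)
  have hres : (f - g : UnitL2) =ᵐ[unitMeasure] fun x => u' x - deriv w x := by
    filter_upwards [Lp.coeFn_sub f g, hu'.coeFn_toLp, hderiv] with x hsub hfx hwx
    rw [hsub, Pi.sub_apply, hfx, hwx]
  have herror : (fun x => u x - w x) =ᵐ[unitMeasure] meanFreeVolterra true (f - g) := by
    filter_upwards [meanFreeVolterra_true_ae (f - g), ae_mem_Icc_unitMeasure] with x hx hmem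
    have hsplit : primitive f x = primitive (f - g : UnitL2) x + primitive g x := by
      rw [← primitive_add (f - g).intervalIntegrable g.intervalIntegrable hmem,
        ← primitive_congr_ae (Lp.coeFn_add (f - g) g) hmem, sub_add_cancel]
    rw [hx, hu x hmem, hwg x hmem, ← primitive_congr_ae hu'.coeFn_toLp hmem, hsplit]
    ring
  refine ⟨w, hw, ?_, ?_⟩
  · rw [← horth, UnitL2.inner_eq]
    refine integral_congr_ae ?_
    filter_upwards [hderiv, hres] with x hwx hfx
    rw [hfx, hwx]
  · have hsq := pow_le_pow_left₀ (norm_nonneg _) hle 2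
    rw [mul_pow, UnitL2.norm_sq_eq, UnitL2.norm_sq_eq] at hsq
    rw [integral_congr_ae (herror.mono fun x hx => congrArg (· ^ 2) hx)]
    rwa [integral_congr_ae (hres.mono fun x hx => congrArg (· ^ 2) hx)] at hsq

end Approximation

section InverseInequality

variable {m p : ℕ} {u : ℝ → ℝ}

theorem integral_sq_linear_ge (α β a : ℝ) {h : ℝ} (hh : 0 ≤ h) :
    h ^ 2 * ∫ _ in a..(a + h), β ^ 2 ≤ 12 * ∫ x in a..(a + h), (β * x + α) ^ 2 := by
  have heval : ∫ x in a..(a + h), (β * x + α) ^ 2 =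
      (α ^ 2 * (a + h) + α * β * (a + h) ^ 2 + β ^ 2 * (a + h) ^ 3 / 3) -
      (α ^ 2 * a + α * β * a ^ 2 + β ^ 2 * a ^ 3 / 3) := by
    refine intervalIntegral.integral_eq_sub_of_hasDerivAt
      (f := fun x => α ^ 2 * x + α * β * x ^ 2 + β ^ 2 * x ^ 3 / 3) (fun x _ => ?_)
      (Continuous.intervalIntegrable (by fun_prop) _ _)
    refine ((((hasDerivAt_id x).const_mul (α ^ 2)).add
      ((hasDerivAt_pow 2 x).const_mul (α * β))).add
      (((hasDerivAt_pow 3 x).const_mul (β ^ 2)).div_const 3)).congr_deriv ?_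
    norm_num
    ring
  have hsq : 0 ≤ h * (2 * α + β * (2 * a + h)) ^ 2 := by positivity
  rw [heval, intervalIntegral.integral_const, smul_eq_mul]
  linear_combination 3 * hsq

theorem IsSpline.integral_sq_deriv_le_of_degree_one (hm : 0 < m) (hu : IsSpline m 1 u) :
    ∫ x, deriv u x ^ 2 ∂unitMeasure ≤ 12 * (m : ℝ) ^ 2 * ∫ x, u x ^ 2 ∂unitMeasure := by
  have : (m : ℝ) ≠ 0 := by exact_mod_cast hm.ne'
  rw [integral_unitMeasure, integral_unitMeasure,
    intervalIntegral_eq_sum_pieces hm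
      (integrable_unitMeasure_iff.1 (hu.memLp_deriv hm).integrable_sq),
    intervalIntegral_eq_sum_pieces hm (integrable_unitMeasure_iff.1 (hu.memLp hm).integrable_sq),
    Finset.mul_sum]
  refine Finset.sum_le_sum fun j hj => ?_
  replace hj := Finset.mem_range.1 hj
  obtain ⟨q, hdeg, hq⟩ := hu.2 j hj
  rw [Polynomial.eq_X_add_C_of_natDegree_le_one hdeg] at hq
  have hpiece : ((j : ℝ) + 1) / m = j / m + 1 / m := add_div _ _ _
  have hsub : Icc ((j : ℝ) / m) (j / m + 1 / m) ⊆ pieceSet m j :=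
    hpiece ▸ Icc_subset_pieceSet hj
  have hmem {x : ℝ} (hx : x ∈ uIoc ((j : ℝ) / m) (j / m + 1 / m)) : x ∈ pieceSet m j := by
    rw [uIoc_of_le (le_add_of_nonneg_right (by positivity))] at hx
    exact hsub (Ioc_subset_Icc_self hx)
  have hderiv : ∫ x in (j : ℝ) / m..j / m + 1 / m, deriv u x ^ 2 =
      ∫ _ in (j : ℝ) / m..j / m + 1 / m, q.coeff 1 ^ 2 := by
    refine intervalIntegral.integral_congr_ae ?_
    filter_upwards [ae_notMem_knots m] with x hk hx
    rw [deriv_eq hj hq (hmem hx) (hu.hasDerivAt hm hk).differentiableAt]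
    simp
  have hvalue : ∫ x in (j : ℝ) / m..j / m + 1 / m, u x ^ 2 =
      ∫ x in (j : ℝ) / m..j / m + 1 / m, (q.coeff 1 * x + q.coeff 0) ^ 2 := by
    refine intervalIntegral.integral_congr_ae (.of_forall fun x hx => ?_)
    rw [hq x (hmem hx)]
    simp
  rw [hpiece, hderiv, hvalue]
  have key := integral_sq_linear_ge (q.coeff 0) (q.coeff 1) (j / m)
    (one_div_nonneg.2 (Nat.cast_nonneg (α := ℝ) m))
  rw [one_div, inv_pow, inv_mul_le_iff₀ (by positivity), ← one_div] at key
  exact key.trans_eq (by ring)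

theorem IsParitySpline.integral_sq_deriv_le (hm : 0 < m) {b : Bool}
    (hu : IsParitySpline m (p + 1) b u) :
    ∫ x, deriv u x ^ 2 ∂unitMeasure ≤ 12 * (m : ℝ) ^ 2 * ∫ x, u x ^ 2 ∂unitMeasure := by
  induction p generalizing b u with
  | zero => exact hu.1.integral_sq_deriv_le_of_degree_one hm
  | succ p ih =>
    have hderiv := hu.isParitySpline_deriv hm
    obtain ⟨hzero, hone⟩ := hu.mul_deriv_eq_zero
    have parts := hu.1.integral_deriv_mul hm hderiv.1 hzero hone
    simp only [← pow_two] at parts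
    have hU : 0 ≤ ∫ x, u x ^ 2 ∂unitMeasure := integral_nonneg fun _ => sq_nonneg _
    -- Integrating by parts, `‖u'‖² = -⟨u, u''⟩ ≤ ‖u‖ ‖u''‖`, and `u''` is controlled by `u'`.
    have key : (∫ x, deriv u x ^ 2 ∂unitMeasure) ^ 2 ≤
        (∫ x, u x ^ 2 ∂unitMeasure) * (12 * (m : ℝ) ^ 2 * ∫ x, deriv u x ^ 2 ∂unitMeasure) := by
      conv_lhs => rw [parts, neg_sq]
      exact (sq_integral_mul_le (hu.1.memLp hm) (hderiv.1.memLp_deriv hm)).trans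
        (mul_le_mul_of_nonneg_left (ih hderiv) hU)
    rcases (integral_nonneg fun x => sq_nonneg (deriv u x) :
      0 ≤ ∫ x, deriv u x ^ 2 ∂unitMeasure).eq_or_lt with hA | hA
    · rw [← hA]
      positivity
    · exact le_of_mul_le_mul_right (by linarith [pow_two (∫ x, deriv u x ^ 2 ∂unitMeasure)]) hA

theorem IsSpline0.integral_sq_deriv_le (hm : 0 < m) (hp : 1 ≤ p) (hu : IsSpline0 m p u) :
    ∫ x, deriv u x ^ 2 ∂unitMeasure ≤ 12 * (m : ℝ) ^ 2 * ∫ x, u x ^ 2 ∂unitMeasure := by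
  obtain ⟨p, rfl⟩ := Nat.exists_eq_add_of_le' hp
  exact (isParitySpline_true_iff.2 hu).integral_sq_deriv_le hm

end InverseInequality

/-! ### Projections orthogonal with respect to one of two bilinear forms -/

section Forms

variable {V : Type*} [AddCommGroup V] [Module ℝ V] {B A : LinearMap.BilinForm ℝ V}

/-- An abstract mass form `B` (symmetric, positive definite) and stiffness form `A` (symmetric,
positive semidefinite) on the same space. -/
structure IsMassStiffnessPair (B A : LinearMap.BilinForm ℝ V) : Prop where
  mass_symm : ∀ x y, B x y = B y x
  mass_nonneg : ∀ x, 0 ≤ B x x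
  mass_definite : ∀ x, B x x = 0 → x = 0
  stiff_symm : ∀ x y, A x y = A y x
  stiff_nonneg : ∀ x, 0 ≤ A x x

/-- `Q` is the `B`-orthogonal projector onto `W`. -/
structure IsOrthProj (B : LinearMap.BilinForm ℝ V) (W : Submodule ℝ V) (Q : V →ₗ[ℝ] V) :
    Prop where
  mem : ∀ x, Q x ∈ W
  sub_orth : ∀ x, ∀ w ∈ W, B (x - Q x) w = 0

/-- `w ∈ W` is a Ritz approximation of `x`: its error is `A`-orthogonal to `w` and, at mesh size
`h`, satisfies an `L²`-type estimate. -/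
structure IsRitzApprox (B A : LinearMap.BilinForm ℝ V) (h : ℝ) (W : Submodule ℝ V) (x w : V) :
    Prop where
  mem : w ∈ W
  orth : A w (x - w) = 0
  mass_sub_le : B (x - w) (x - w) ≤ h ^ 2 * A (x - w) (x - w)

/-- `W` satisfies, at mesh size `h`, the inverse inequality and the approximation estimate enjoyed
by the reduced spline space `S₀`. -/
structure IsMultiscaleSpace (B A : LinearMap.BilinForm ℝ V) (h : ℝ) (W : Submodule ℝ V) :
    Prop where
  inverse : ∀ w ∈ W, h ^ 2 * A w w ≤ 12 * B w w
  exists_ritz : ∀ x, ∃ w, IsRitzApprox B A h W x w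

/-- The basis `e` is `B`-orthonormal and diagonalizes `A` with eigenvalues `l`. -/
structure IsEigenbasis {ι : Type*} [DecidableEq ι] (B A : LinearMap.BilinForm ℝ V)
    (e : Module.Basis ι ℝ V) (l : ι → ℝ) : Prop where
  nonneg : ∀ k, 0 ≤ l k
  mass : ∀ i j, B (e i) (e j) = if i = j then 1 else 0
  stiff : ∀ i j, A (e i) (e j) = if i = j then l i else 0

namespace IsMassStiffnessPair

/-- The inner product on `V` given by the mass form. -/
abbrev core (hBA : IsMassStiffnessPair B A) : InnerProductSpace.Core ℝ V where
  inner x y := B x y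
  conj_inner_symm x y := hBA.mass_symm y x
  re_inner_nonneg x := hBA.mass_nonneg x
  add_left x y z := by simp
  smul_left x y r := by simp
  definite x h := hBA.mass_definite x h

theorem exists_isOrthProj [FiniteDimensional ℝ V] (hBA : IsMassStiffnessPair B A)
    (W : Submodule ℝ V) : ∃ Q, IsOrthProj B W Q := by
  let : NormedAddCommGroup V := hBA.core.toNormedAddCommGroup
  let : InnerProductSpace ℝ V := InnerProductSpace.ofCore hBA.core.toCore
  refine ⟨W.starProjection, W.starProjection_apply_mem, fun x w hw => ?_⟩
  rw [hBA.mass_symm]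
  exact W.sub_starProjection_mem_orthogonal x w hw

theorem exists_isEigenbasis [FiniteDimensional ℝ V] (hBA : IsMassStiffnessPair B A) :
    ∃ (e : Module.Basis (Fin (Module.finrank ℝ V)) ℝ V) (l : _ → ℝ), IsEigenbasis B A e l := by
  let : NormedAddCommGroup V := hBA.core.toNormedAddCommGroup
  let : InnerProductSpace ℝ V := InnerProductSpace.ofCore hBA.core.toCore
  let T : V →ₗ[ℝ] V :=
    (InnerProductSpace.toDual ℝ V).symm.toLinearMap ∘ₗ
      LinearMap.toContinuousLinearMap.toLinearMap ∘ₗ A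
  have inner_T (x y : V) : inner ℝ (T x) y = A x y :=
    InnerProductSpace.toDual_symm_apply
  have hT : T.IsSymmetric := fun x y => by
    rw [inner_T, real_inner_comm, inner_T, hBA.stiff_symm]
  let e := hT.eigenvectorBasis rfl
  let l := hT.eigenvalues rfl
  have mass := orthonormal_iff_ite.1 e.orthonormal
  have stiff (i j) : A (e i) (e j) = if i = j then l i else 0 := by
    rw [← inner_T, hT.apply_eigenvectorBasis, inner_smul_left, mass]
    simp [l]
  refine ⟨e.toBasis, l, fun k => ?_, ?_, ?_⟩
  · simpa [stiff] using hBA.stiff_nonneg (e k)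
  · rw [OrthonormalBasis.coe_toBasis]
    exact mass
  · rw [OrthonormalBasis.coe_toBasis]
    exact stiff

theorem stiff_add_le (hBA : IsMassStiffnessPair B A) (x y : V) :
    A (x + y) (x + y) ≤ 2 * A x x + 2 * A y y := by
  have := hBA.stiff_nonneg (x - y)
  simp only [map_add, map_sub, LinearMap.add_apply, LinearMap.sub_apply] at *
  linarith

end IsMassStiffnessPair

theorem IsRitzApprox.stiff_eq (hBA : IsMassStiffnessPair B A) {W : Submodule ℝ V} {h : ℝ}
    {x w : V} (hw : IsRitzApprox B A h W x w) : A x x = A w w + A (x - w) (x - w) := by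
  have orth := hw.orth
  have orth' := hBA.stiff_symm w (x - w)
  simp only [map_sub, LinearMap.sub_apply] at *
  linarith

namespace IsOrthProj

variable {W : Submodule ℝ V} {Q : V →ₗ[ℝ] V} {h : ℝ}

theorem mass_sub_eq (hBA : IsMassStiffnessPair B A) (hQ : IsOrthProj B W Q) (x : V) {w : V}
    (hw : w ∈ W) : B (x - w) (x - w) = B (x - Q x) (x - Q x) + B (Q x - w) (Q x - w) := by
  have orth := hQ.sub_orth x (Q x - w) (W.sub_mem (hQ.mem x) hw)
  have orth' := hBA.mass_symm (x - Q x) (Q x - w)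
  rw [← sub_add_sub_cancel x (Q x) w]
  simp only [map_add, LinearMap.add_apply] at *
  linarith

theorem mass_eq (hBA : IsMassStiffnessPair B A) (hQ : IsOrthProj B W Q) (x : V) :
    B x x = B (x - Q x) (x - Q x) + B (Q x) (Q x) := by
  simpa using hQ.mass_sub_eq hBA x W.zero_mem

theorem mass_le (hBA : IsMassStiffnessPair B A) (hQ : IsOrthProj B W Q) (x : V) :
    B (Q x) (Q x) ≤ B x x := by
  linarith [hQ.mass_eq hBA x, hBA.mass_nonneg (x - Q x)]

theorem mass_sub_le (hBA : IsMassStiffnessPair B A) (hQ : IsOrthProj B W Q) (x : V) :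
    B (x - Q x) (x - Q x) ≤ B x x := by
  linarith [hQ.mass_eq hBA x, hBA.mass_nonneg (Q x)]

theorem apply_eq_self (hBA : IsMassStiffnessPair B A) (hQ : IsOrthProj B W Q) {w : V}
    (hw : w ∈ W) : Q w = w :=
  (sub_eq_zero.1 (hBA.mass_definite _ (hQ.sub_orth w _ (W.sub_mem hw (hQ.mem w))))).symm

theorem stiff_le_of_mass_le (hBA : IsMassStiffnessPair B A) (hQ : IsOrthProj B W Q)
    (hh : 0 < h) (hW : IsMultiscaleSpace B A h W) {y : V} (hy : B y y ≤ h ^ 2 * A y y) :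
    A (Q y) (Q y) ≤ 12 * A y y := by
  refine le_of_mul_le_mul_left ?_ (pow_pos hh 2)
  linarith [hW.inverse _ (hQ.mem y), hQ.mass_le hBA y]

theorem stiff_sub_le_of_ritz (hBA : IsMassStiffnessPair B A) (hQ : IsOrthProj B W Q)
    (hh : 0 < h) (hW : IsMultiscaleSpace B A h W) {x w : V} (hw : IsRitzApprox B A h W x w) :
    A (x - Q x) (x - Q x) ≤ 26 * A (x - w) (x - w) := by
  have split : x - Q x = (x - w) + -Q (x - w) := by
    rw [map_sub, hQ.apply_eq_self hBA hw.mem]; abel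
  have := hBA.stiff_add_le (x - w) (-Q (x - w))
  rw [← split] at this
  simp only [map_neg, LinearMap.neg_apply, neg_neg] at this
  linarith [hQ.stiff_le_of_mass_le hBA hh hW hw.mass_sub_le]

theorem stiff_le (hBA : IsMassStiffnessPair B A) (hQ : IsOrthProj B W Q)
    (hh : 0 < h) (hW : IsMultiscaleSpace B A h W) (x : V) :
    A (Q x) (Q x) ≤ 26 * A x x := by
  obtain ⟨w, hw⟩ := hW.exists_ritz x
  have split : Q x = w + Q (x - w) := by
    rw [map_sub, hQ.apply_eq_self hBA hw.mem]; abel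
  have := hBA.stiff_add_le w (Q (x - w))
  rw [← split] at this
  linarith [hQ.stiff_le_of_mass_le hBA hh hW hw.mass_sub_le, hw.stiff_eq hBA,
    hBA.stiff_nonneg w, hBA.stiff_nonneg (x - w)]

theorem stiff_sub_le (hBA : IsMassStiffnessPair B A) (hQ : IsOrthProj B W Q)
    (hh : 0 < h) (hW : IsMultiscaleSpace B A h W) (x : V) :
    A (x - Q x) (x - Q x) ≤ 26 * A x x := by
  obtain ⟨w, hw⟩ := hW.exists_ritz x
  linarith [hQ.stiff_sub_le_of_ritz hBA hh hW hw, hw.stiff_eq hBA, hBA.stiff_nonneg w]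

theorem mass_sub_le_stiff (hBA : IsMassStiffnessPair B A) (hQ : IsOrthProj B W Q)
    (hW : IsMultiscaleSpace B A h W) (x : V) :
    B (x - Q x) (x - Q x) ≤ h ^ 2 * A x x := by
  obtain ⟨w, hw⟩ := hW.exists_ritz x
  calc B (x - Q x) (x - Q x) ≤ B (x - w) (x - w) := by
        linarith [hQ.mass_sub_eq hBA x hw.mem, hBA.mass_nonneg (Q x - w)]
    _ ≤ h ^ 2 * A (x - w) (x - w) := hw.mass_sub_le
    _ ≤ h ^ 2 * A x x := by
        gcongr
        linarith [hw.stiff_eq hBA, hBA.stiff_nonneg w]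

theorem stiff_sub_le_of_dual (hBA : IsMassStiffnessPair B A) (hQ : IsOrthProj B W Q)
    (hh : 0 < h) (hW : IsMultiscaleSpace B A h W) {x : V} {N : ℝ} (hN : 0 ≤ N)
    (dual : ∀ y, A x y ^ 2 ≤ N * B y y) :
    A (x - Q x) (x - Q x) ≤ 26 * (h ^ 2 * N) := by
  obtain ⟨w, hw⟩ := hW.exists_ritz x
  refine (hQ.stiff_sub_le_of_ritz hBA hh hW hw).trans ?_
  gcongr
  have galerkin : A x (x - w) = A (x - w) (x - w) := by
    conv_lhs => rw [← add_sub_cancel w x, map_add, LinearMap.add_apply]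
    rw [add_sub_cancel, hw.orth, zero_add]
  have sq_le : A (x - w) (x - w) ^ 2 ≤ h ^ 2 * N * A (x - w) (x - w) :=
    calc A (x - w) (x - w) ^ 2 ≤ N * B (x - w) (x - w) := galerkin ▸ dual (x - w)
      _ ≤ N * (h ^ 2 * A (x - w) (x - w)) := by gcongr; exact hw.mass_sub_le
      _ = h ^ 2 * N * A (x - w) (x - w) := by ring
  rcases (hBA.stiff_nonneg (x - w)).eq_or_lt with zero | pos
  · rw [← zero]; positivity
  · exact le_of_mul_le_mul_right (by rwa [← sq]) pos

end IsOrthProj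

end Forms

/-! ### Weighted square sums -/

section Weighted

variable {ι : Type*} [Fintype ι]

/-- The square of the `ℓ²`-norm with weight `w`. -/
def weightedSq (w x : ι → ℝ) : ℝ := ∑ k, w k * x k ^ 2

/-- The matrix `T` maps the `w'`-weighted `ℓ²`-space to the `w`-weighted one with norm at most
`√C`. -/
def MatrixBound (w w' : ι → ℝ) (C : ℝ) (T : Matrix ι ι ℝ) : Prop :=
  ∀ x, weightedSq w (T.mulVec x) ≤ C * weightedSq w' x

theorem weightedSq_nonneg {w : ι → ℝ} (hw : 0 ≤ w) (x : ι → ℝ) : 0 ≤ weightedSq w x :=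
  Finset.sum_nonneg fun k _ => mul_nonneg (hw k) (sq_nonneg _)

theorem weightedSq_mono {w w' : ι → ℝ} (h : w ≤ w') (x : ι → ℝ) :
    weightedSq w x ≤ weightedSq w' x :=
  Finset.sum_le_sum fun k _ => mul_le_mul_of_nonneg_right (h k) (sq_nonneg _)

theorem weightedSq_sum {σ : Type*} (s : Finset σ) (w : σ → ι → ℝ) (x : ι → ℝ) :
    weightedSq (∑ a ∈ s, w a) x = ∑ a ∈ s, weightedSq (w a) x := by
  simp only [weightedSq, Finset.sum_apply, Finset.sum_mul]
  exact Finset.sum_comm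

namespace MatrixBound

variable {w w' : ι → ℝ} {C C' : ℝ} {T : Matrix ι ι ℝ}

theorem mono (h : MatrixBound w w' C T) (hC : C ≤ C') (hw' : 0 ≤ w') : MatrixBound w w' C' T :=
  fun x => (h x).trans (mul_le_mul_of_nonneg_right hC (weightedSq_nonneg hw' x))

theorem mono_weight {w'' : ι → ℝ} (h : MatrixBound w w' C T) (hC : 0 ≤ C) (hw : w' ≤ w'') :
    MatrixBound w w'' C T :=
  fun x => (h x).trans (mul_le_mul_of_nonneg_left (weightedSq_mono hw x) hC)

theorem one [DecidableEq ι] (w : ι → ℝ) : MatrixBound w w 1 1 := fun x => by simp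

theorem sum_weight {σ : Type*} (s : Finset σ) {v v' : σ → ι → ℝ}
    (h : ∀ a ∈ s, MatrixBound (v a) (v' a) C T) :
    MatrixBound (∑ a ∈ s, v a) (∑ a ∈ s, v' a) C T := fun x => by
  rw [weightedSq_sum, weightedSq_sum, Finset.mul_sum]
  exact Finset.sum_le_sum fun a ha => h a ha x

theorem sum_matrix {σ : Type*} (s : Finset σ) {T : σ → Matrix ι ι ℝ} (hw : 0 ≤ w)
    (h : ∀ a ∈ s, MatrixBound w w' C (T a)) :
    MatrixBound w w' (s.card ^ 2 * C) (∑ a ∈ s, T a) := fun x =>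
  calc weightedSq w ((∑ a ∈ s, T a).mulVec x)
      = ∑ k, w k * (∑ a ∈ s, (T a).mulVec x k) ^ 2 := by
        simp only [weightedSq, Matrix.sum_mulVec, Finset.sum_apply]
    _ ≤ ∑ k, w k * (s.card * ∑ a ∈ s, (T a).mulVec x k ^ 2) := by
        gcongr with k
        · exact hw k
        · exact sq_sum_le_card_mul_sum_sq
    _ = s.card * ∑ a ∈ s, weightedSq w ((T a).mulVec x) := by
        simp only [weightedSq, Finset.mul_sum, mul_left_comm]
        exact Finset.sum_comm
    _ ≤ s.card * ∑ _a ∈ s, C * weightedSq w' x := by gcongr with _ ha; exact h _ ha x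
    _ = s.card ^ 2 * C * weightedSq w' x := by
        rw [Finset.sum_const, nsmul_eq_mul]; ring

end MatrixBound

end Weighted

/-! ### Matrices of projections in an eigenbasis -/

section Matrices

variable {ι : Type*} [Fintype ι] [DecidableEq ι]

/-- `T` is stable with respect to the mass weight `1` and the stiffness weight `l`. The constant
is `2 * (1 + 12)`, where `12` is that of the inverse inequality. -/
def IsStableMatrix (l : ι → ℝ) (T : Matrix ι ι ℝ) : Prop :=
  ∀ v ∈ ({1, l} : Set (ι → ℝ)), MatrixBound v v 26 T

/-- `1 - P` gains one factor of the mesh size `h` per square root of an eigenvalue. -/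
def IsApproxMatrix (l : ι → ℝ) (h : ℝ) (P : Matrix ι ι ℝ) : Prop :=
  ∀ v ∈ ({1, l} : Set (ι → ℝ)), MatrixBound v (v * l) (26 * h ^ 2) (1 - P)

variable {V : Type*} [AddCommGroup V] [Module ℝ V] {B A : LinearMap.BilinForm ℝ V}
  {e : Module.Basis ι ℝ V} {l : ι → ℝ}

theorem bilin_eq_sum_of_diagonal {F : LinearMap.BilinForm ℝ V} {c : ι → ℝ}
    (h : ∀ i j, F (e i) (e j) = if i = j then c i else 0) (x y : V) :
    F x y = ∑ k, c k * (e.equivFun x k * e.equivFun y k) := by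
  conv_lhs => rw [← e.sum_equivFun x, ← e.sum_equivFun y]
  simp only [map_sum, map_smul, LinearMap.sum_apply, LinearMap.smul_apply, smul_eq_mul, h,
    mul_ite, mul_zero, Finset.sum_ite_eq', Finset.mem_univ, if_true]
  exact Finset.sum_congr rfl fun k _ => by ring

namespace IsEigenbasis

theorem mass_eq_sum (he : IsEigenbasis B A e l) (x y : V) :
    B x y = ∑ k, e.equivFun x k * e.equivFun y k := by
  simpa only [one_mul] using bilin_eq_sum_of_diagonal (c := fun _ => 1) he.mass x y

theorem stiff_eq_sum (he : IsEigenbasis B A e l) (x y : V) :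
    A x y = ∑ k, l k * (e.equivFun x k * e.equivFun y k) :=
  bilin_eq_sum_of_diagonal he.stiff x y

theorem vecMul_toMatrix_apply (he : IsEigenbasis B A e l) (T : V →ₗ[ℝ] V) (u : V) (j : ι) :
    Matrix.vecMul (e.equivFun u) (LinearMap.toMatrix e e T) j = B u (T (e j)) := by
  rw [he.mass_eq_sum]
  simp only [Matrix.vecMul, dotProduct, LinearMap.toMatrix_apply, Module.Basis.equivFun_apply]

theorem mass_basis_right (he : IsEigenbasis B A e l) (u : V) (j : ι) :
    B u (e j) = e.equivFun u j := by
  simpa using (he.vecMul_toMatrix_apply 1 u j).symm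

theorem weightedSq_one (he : IsEigenbasis B A e l) (x : V) :
    weightedSq 1 (e.equivFun x) = B x x := by
  simp [he.mass_eq_sum, weightedSq, sq]

theorem weightedSq_eig (he : IsEigenbasis B A e l) (x : V) :
    weightedSq l (e.equivFun x) = A x x := by
  simp [he.stiff_eq_sum, weightedSq, sq]

theorem sq_stiff_le (he : IsEigenbasis B A e l) (x y : V) :
    A x y ^ 2 ≤ weightedSq (l * l) (e.equivFun x) * B y y := by
  have := Finset.sum_mul_sq_le_sq_mul_sq Finset.univ (fun k => l k * e.equivFun x k)
    (e.equivFun y)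
  rw [← he.weightedSq_one, he.stiff_eq_sum]
  simpa only [weightedSq, mul_pow, sq (l _), Pi.mul_apply, Pi.one_apply, one_mul,
    mul_assoc] using this

end IsEigenbasis

theorem matrixBound_toMatrix {w w' : ι → ℝ} {C : ℝ} {T : V →ₗ[ℝ] V}
    (h : ∀ x, weightedSq w (e.equivFun (T x)) ≤ C * weightedSq w' (e.equivFun x)) :
    MatrixBound w w' C (LinearMap.toMatrix e e T) := fun x => by
  obtain ⟨y, rfl⟩ := e.equivFun.surjective x
  simpa only [Module.Basis.equivFun_apply, LinearMap.toMatrix_mulVec_repr] using h y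

theorem isStableMatrix_toMatrix (hBA : IsMassStiffnessPair B A) (he : IsEigenbasis B A e l)
    {T : V →ₗ[ℝ] V} (mass : ∀ x, B (T x) (T x) ≤ B x x)
    (stiff : ∀ x, A (T x) (T x) ≤ 26 * A x x) :
    IsStableMatrix l (LinearMap.toMatrix e e T) := by
  rintro v (rfl | rfl) <;> refine matrixBound_toMatrix fun x => ?_
  · rw [he.weightedSq_one, he.weightedSq_one]
    linarith [mass x, hBA.mass_nonneg x]
  · rw [he.weightedSq_eig, he.weightedSq_eig]
    exact stiff x

namespace IsOrthProj

variable {W : Submodule ℝ V} {Q : V →ₗ[ℝ] V} {h : ℝ}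

theorem isStableMatrix (hBA : IsMassStiffnessPair B A) (he : IsEigenbasis B A e l)
    (hQ : IsOrthProj B W Q) (hh : 0 < h) (hW : IsMultiscaleSpace B A h W) :
    IsStableMatrix l (LinearMap.toMatrix e e Q) :=
  isStableMatrix_toMatrix hBA he (hQ.mass_le hBA) (hQ.stiff_le hBA hh hW)

theorem isStableMatrix_one_sub (hBA : IsMassStiffnessPair B A) (he : IsEigenbasis B A e l)
    (hQ : IsOrthProj B W Q) (hh : 0 < h) (hW : IsMultiscaleSpace B A h W) :
    IsStableMatrix l (LinearMap.toMatrix e e (1 - Q)) :=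
  isStableMatrix_toMatrix hBA he (hQ.mass_sub_le hBA) (hQ.stiff_sub_le hBA hh hW)

theorem isApproxMatrix (hBA : IsMassStiffnessPair B A) (he : IsEigenbasis B A e l)
    (hQ : IsOrthProj B W Q) (hh : 0 < h) (hW : IsMultiscaleSpace B A h W) :
    IsApproxMatrix l h (LinearMap.toMatrix e e Q) := by
  rw [IsApproxMatrix, ← LinearMap.toMatrix_one e, ← map_sub]
  rintro v (rfl | rfl) <;> refine matrixBound_toMatrix fun x => ?_
  · rw [one_mul, he.weightedSq_one, he.weightedSq_eig]
    have nonneg := mul_nonneg (sq_nonneg h) (hBA.stiff_nonneg x)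
    exact (hQ.mass_sub_le_stiff hBA hW x).trans (by linarith)
  · rw [he.weightedSq_eig, mul_assoc]
    refine hQ.stiff_sub_le_of_dual hBA hh hW (weightedSq_nonneg ?_ _) (he.sq_stiff_le x)
    exact fun k => mul_self_nonneg _

theorem vecMul_toMatrix_of_mem (hBA : IsMassStiffnessPair B A) (he : IsEigenbasis B A e l)
    (hQ : IsOrthProj B W Q) {u : V} (hu : u ∈ W) :
    Matrix.vecMul (e.equivFun u) (LinearMap.toMatrix e e Q) = e.equivFun u := by
  ext j
  have orth := hQ.sub_orth (e j) u hu
  rw [hBA.mass_symm, map_sub, sub_eq_zero] at orth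
  rw [he.vecMul_toMatrix_apply, ← orth, he.mass_basis_right]

theorem vecMul_toMatrix_one_sub_of_orth (he : IsEigenbasis B A e l) (hQ : IsOrthProj B W Q)
    {u : V} (hu : ∀ w ∈ W, B u w = 0) :
    Matrix.vecMul (e.equivFun u) (LinearMap.toMatrix e e (1 - Q)) = e.equivFun u := by
  ext j
  rw [he.vecMul_toMatrix_apply, LinearMap.sub_apply, map_sub, hu _ (hQ.mem _), sub_zero]
  exact he.mass_basis_right u j

end IsOrthProj

end Matrices

/-! ### Spline spaces -/

section SplineSpace

variable {m p : ℕ} {u v : ℝ → ℝ}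

theorem zero_notMem_knots (m : ℕ) : (0 : ℝ) ∉ knots m := fun h => (knots_subset_Ioo m h).1.false

theorem one_notMem_knots (m : ℕ) : (1 : ℝ) ∉ knots m := fun h => (knots_subset_Ioo m h).2.false

/-- The spline space `S` as a submodule. -/
def splineSpace (m p : ℕ) : Submodule ℝ (ℝ → ℝ) where
  carrier := {u | IsSpline m p u}
  zero_mem' := ⟨contDiffOn_const, fun _ _ => ⟨0, by simp, fun _ _ => by simp⟩⟩
  add_mem' {u v} hu hv := by
    refine ⟨hu.1.add hv.1, fun j hj => ?_⟩
    obtain ⟨q, hq, huq⟩ := hu.2 j hj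
    obtain ⟨r, hr, hvr⟩ := hv.2 j hj
    exact ⟨q + r, (Polynomial.natDegree_add_le q r).trans (max_le hq hr), fun x hx => by
      simp [huq x hx, hvr x hx]⟩
  smul_mem' c u hu := by
    refine ⟨hu.1.const_smul c, fun j hj => ?_⟩
    obtain ⟨q, hq, huq⟩ := hu.2 j hj
    exact ⟨c • q, (Polynomial.natDegree_smul_le c q).trans hq, fun x hx => by simp [huq x hx]⟩

/-- The reduced spline space `S₀` as a submodule. Positivity of `m` makes its elements smooth at
the endpoints, so that the boundary conditions are linear. -/
def splineSpace0 (hm : 0 < m) (p : ℕ) : Submodule ℝ (ℝ → ℝ) where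
  carrier := {u | IsSpline0 m p u}
  zero_mem' := ⟨(splineSpace m p).zero_mem, fun l _ => by simp⟩
  add_mem' {u v} hu hv := by
    refine ⟨(splineSpace m p).add_mem hu.1 hv.1, fun l hl => ?_⟩
    have add {x : ℝ} (hx : x ∉ knots m) :=
      iteratedDeriv_add (hu.1.contDiffAt hm hx (2 * l + 1)) (hv.1.contDiffAt hm hx _)
    rw [add (zero_notMem_knots m), add (one_notMem_knots m), (hu.2 l hl).1, (hu.2 l hl).2,
      (hv.2 l hl).1, (hv.2 l hl).2, add_zero]
    exact ⟨rfl, rfl⟩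
  smul_mem' c u hu := by
    refine ⟨(splineSpace m p).smul_mem c hu.1, fun l hl => ?_⟩
    have smul {x : ℝ} (hx : x ∉ knots m) :=
      iteratedDeriv_const_smul (hu.1.contDiffAt hm hx (2 * l + 1)) c
    rw [smul (zero_notMem_knots m), smul (one_notMem_knots m), (hu.2 l hl).1, (hu.2 l hl).2,
      smul_zero]
    exact ⟨rfl, rfl⟩

theorem pieceSet_two_mul_subset {k j : ℕ} (hj : j < 2 * k) :
    pieceSet (2 * k) j ⊆ pieceSet k (j / 2) := fun x hx => by
  rw [mem_pieceSet_iff hj] at hx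
  rw [mem_pieceSet_iff (by omega)]
  have lower : 2 * ((j / 2 : ℕ) : ℝ) ≤ j := by exact_mod_cast (by omega : 2 * (j / 2) ≤ j)
  have upper : (j : ℝ) + 1 ≤ 2 * ((j / 2 : ℕ) : ℝ) + 2 := by
    exact_mod_cast (by omega : j + 1 ≤ 2 * (j / 2) + 2)
  push_cast at hx
  exact ⟨hx.1.imp (by omega) fun h => by linarith, hx.2.imp (by omega) fun h => by linarith⟩

theorem IsSpline.two_mul {k : ℕ} (hu : IsSpline k p u) : IsSpline (2 * k) p u :=
  ⟨hu.1, fun j hj => (hu.2 (j / 2) (by omega)).imp fun _ hq =>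
    ⟨hq.1, fun x hx => hq.2 x (pieceSet_two_mul_subset hj hx)⟩⟩

theorem IsSpline.eq_zero_of_eqOn_Ioo (hm : 0 < m) (hu : IsSpline m p u)
    (h : EqOn u 0 (Ioo 0 1)) : u = 0 := by
  funext x
  have hj := pieceIndex_lt hm x
  set j := pieceIndex m x
  obtain ⟨q, -, huq⟩ := hu.2 j hj
  have hlt : (j : ℝ) / m < ((j : ℝ) + 1) / m := by gcongr; exact lt_add_one _
  have ends := Icc_piece_subset hj
  have hq : q = 0 := Polynomial.eq_of_infinite_eval_eq q 0 <| (Ioo_infinite hlt).mono fun t ht => by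
    have ht' : t ∈ Ioo (0 : ℝ) 1 := Ioo_subset_Ioo (ends (left_mem_Icc.2 hlt.le)).1
      (ends (right_mem_Icc.2 hlt.le)).2 ht
    rw [mem_ofPred_eq, ← huq t (Icc_subset_pieceSet hj (Ioo_subset_Icc_self ht)), h ht']
    simp
  rw [huq x (mem_pieceSet_pieceIndex hm x), hq]
  simp

/-- The function that coincides with the polynomial `q j` on the `j`-th piece. -/
def piecewisePolynomial (hm : 0 < m) (p : ℕ) :
    (Fin m → Polynomial.degreeLT ℝ (p + 1)) →ₗ[ℝ] (ℝ → ℝ) :=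
  LinearMap.pi fun x => Polynomial.leval x ∘ₗ (Polynomial.degreeLT ℝ (p + 1)).subtype ∘ₗ
    LinearMap.proj ⟨pieceIndex m x, pieceIndex_lt hm x⟩

theorem splineSpace_le_range_piecewisePolynomial (hm : 0 < m) (p : ℕ) :
    splineSpace m p ≤ LinearMap.range (piecewisePolynomial hm p) := fun u hu => by
  choose q hq huq using fun j : Fin m => hu.2 j j.2
  refine ⟨fun j => ⟨q j, Polynomial.mem_degreeLT.2 ?_⟩, funext fun x => ?_⟩
  · exact Polynomial.degree_le_natDegree.trans_lt (by exact_mod_cast Nat.lt_succ_of_le (hq j))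
  · exact (huq ⟨_, pieceIndex_lt hm x⟩ x (mem_pieceSet_pieceIndex hm x)).symm

theorem finiteDimensional_splineSpace (hm : 0 < m) (p : ℕ) :
    FiniteDimensional ℝ (splineSpace m p) := by
  have := Module.Finite.equiv (Polynomial.degreeLTEquiv ℝ (p + 1)).symm
  exact Submodule.finiteDimensional_of_le (splineSpace_le_range_piecewisePolynomial hm p)

/-- The class in `L²(0,1)` of a spline. -/
def splineToLp (hm : 0 < m) (p : ℕ) : splineSpace m p →ₗ[ℝ] UnitL2 where
  toFun u := (u.2.memLp hm).toLp _
  map_add' _ _ := rfl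
  map_smul' _ _ := rfl

/-- The class in `L²(0,1)` of the derivative of a spline. -/
def splineDerivToLp (hm : 0 < m) (p : ℕ) : splineSpace m p →ₗ[ℝ] UnitL2 where
  toFun u := (u.2.memLp_deriv hm).toLp _
  map_add' u v := by
    rw [← MemLp.toLp_add, MemLp.toLp_eq_toLp_iff]
    filter_upwards [ae_restrict_of_ae (ae_notMem_knots m)] with x hx
    exact ((u.2.hasDerivAt hm hx).add (v.2.hasDerivAt hm hx)).deriv
  map_smul' c u := by
    rw [RingHom.id_apply, ← MemLp.toLp_const_smul, MemLp.toLp_eq_toLp_iff]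
    exact ae_of_all _ fun x => deriv_const_smul_field c _

/-- The `L²(0,1)` inner product on the spline space. -/
def massForm (hm : 0 < m) (p : ℕ) : LinearMap.BilinForm ℝ (splineSpace m p) :=
  (innerₗ UnitL2).compl₁₂ (splineToLp hm p) (splineToLp hm p)

/-- The `H¹(0,1)` semi-inner product on the spline space. -/
def stiffnessForm (hm : 0 < m) (p : ℕ) : LinearMap.BilinForm ℝ (splineSpace m p) :=
  (innerₗ UnitL2).compl₁₂ (splineDerivToLp hm p) (splineDerivToLp hm p)

theorem inner_toLp_toLp {f g : ℝ → ℝ} (hf : MemLp f 2 unitMeasure) (hg : MemLp g 2 unitMeasure) :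
    inner ℝ (hf.toLp f) (hg.toLp g) = ∫ x, f x * g x ∂unitMeasure := by
  rw [UnitL2.inner_eq]
  refine integral_congr_ae ?_
  filter_upwards [hf.coeFn_toLp, hg.coeFn_toLp] with x hfx hgx
  rw [hfx, hgx]

theorem massForm_apply (hm : 0 < m) (u v : splineSpace m p) :
    massForm hm p u v = ∫ x, u.1 x * v.1 x ∂unitMeasure :=
  inner_toLp_toLp (u.2.memLp hm) (v.2.memLp hm)

theorem stiffnessForm_apply (hm : 0 < m) (u v : splineSpace m p) :
    stiffnessForm hm p u v = ∫ x, deriv u.1 x * deriv v.1 x ∂unitMeasure :=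
  inner_toLp_toLp (u.2.memLp_deriv hm) (v.2.memLp_deriv hm)

theorem splineToLp_injective (hm : 0 < m) (p : ℕ) : Function.Injective (splineToLp hm p) := by
  rw [← LinearMap.ker_eq_bot, LinearMap.ker_eq_bot']
  intro u hu
  have ae_zero : u.1 =ᵐ[unitMeasure] 0 := 
    (u.2.memLp hm).coeFn_toLp.symm.trans (Lp.eq_zero_iff_ae_eq_zero.1 hu)
  exact Subtype.ext <| u.2.eq_zero_of_eqOn_Ioo hm <|
    Measure.eqOn_open_of_ae_eq ae_zero isOpen_Ioo (u.2.continuous hm).continuousOn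
      continuousOn_const

theorem isMassStiffnessPair_splineSpace (hm : 0 < m) (p : ℕ) :
    IsMassStiffnessPair (massForm hm p) (stiffnessForm hm p) where
  mass_symm u v := real_inner_comm (splineToLp hm p v) (splineToLp hm p u)
  mass_nonneg u := real_inner_self_nonneg (x := splineToLp hm p u)
  mass_definite u hu := splineToLp_injective hm p <| by
    rw [map_zero]
    exact inner_self_eq_zero.1 hu
  stiff_symm u v := real_inner_comm (splineDerivToLp hm p v) (splineDerivToLp hm p u)
  stiff_nonneg u := real_inner_self_nonneg (x := splineDerivToLp hm p u)

theorem exists_isRitzApprox_splineSpace0 {M : ℕ} (hm : 0 < m) (hM : 0 < M) (hp : 1 ≤ p)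
    (hMm : splineSpace M p ≤ splineSpace m p) (u : splineSpace m p) :
    ∃ w, IsRitzApprox (massForm hm p) (stiffnessForm hm p) (1 / M)
      ((splineSpace0 hM p).comap (splineSpace m p).subtype) u w := by
  obtain ⟨q, rfl⟩ := Nat.exists_eq_add_of_le' hp
  obtain ⟨w, hw, orth, le⟩ := exists_isSpline0_approx hM q (u.2.memLp_deriv hm)
    fun x hx => u.2.eq_add_primitive_deriv hm hx
  let w' : splineSpace m (q + 1) := ⟨w, hMm hw.1⟩
  have deriv_sub : deriv (u - w').1 =ᵐ[unitMeasure] deriv u.1 - deriv w := by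
    filter_upwards [ae_restrict_of_ae (ae_notMem_knots m)] with x hx
    exact ((u.2.hasDerivAt hm hx).sub (w'.2.hasDerivAt hm hx)).deriv
  refine ⟨w', hw, ?_, ?_⟩
  · rw [stiffnessForm_apply, ← orth]
    exact integral_congr_ae (deriv_sub.mono fun x hx => by simp only [hx, Pi.sub_apply, w'])
  · have stiff : stiffnessForm hm (q + 1) (u - w') (u - w') =
        ∫ x, (deriv u.1 x - deriv w x) ^ 2 ∂unitMeasure := by
      rw [stiffnessForm_apply]
      exact integral_congr_ae (deriv_sub.mono fun x hx => by simp only [hx, Pi.sub_apply, sq])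
    rw [massForm_apply, stiff]
    simpa only [sq, Submodule.coe_sub, Pi.sub_apply] using le

theorem isMultiscaleSpace_splineSpace0 {M : ℕ} (hm : 0 < m) (hM : 0 < M) (hp : 1 ≤ p)
    (hMm : splineSpace M p ≤ splineSpace m p) :
    IsMultiscaleSpace (massForm hm p) (stiffnessForm hm p) (1 / M)
      ((splineSpace0 hM p).comap (splineSpace m p).subtype) where
  inverse w hw := by
    have inverse := IsSpline0.integral_sq_deriv_le hM hp (u := w.1) hw
    simp only [sq (deriv _ _), sq (w.1 _)] at inverse
    rw [massForm_apply, stiffnessForm_apply, one_div, inv_pow, inv_mul_le_iff₀ (by positivity)]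
    linarith
  exists_ritz := exists_isRitzApprox_splineSpace0 hm hM hp hMm

theorem splineSpace_half_le (hm : m % 2 = 0) (p : ℕ) :
    splineSpace (m / 2) p ≤ splineSpace m p := fun u hu => by
  have two_mul := IsSpline.two_mul hu
  rwa [Nat.mul_div_cancel' (Nat.dvd_of_mod_eq_zero hm)] at two_mul

/-- The projector `Q_a` onto the component `S_a` of `S = S₀ ⊕ S₁`, given `Q = Q₀`. -/
def componentProj {V : Type*} [AddCommGroup V] [Module ℝ V] (Q : V →ₗ[ℝ] V) : Bool → V →ₗ[ℝ] V
  | false => Q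
  | true => 1 - Q

section Component

variable {hm : 0 < m} {Q : splineSpace m p →ₗ[ℝ] splineSpace m p}

theorem isSplineC_componentProj
    (hQ : IsOrthProj (massForm hm p) ((splineSpace0 hm p).comap (splineSpace m p).subtype) Q)
    (a : Bool) (u : splineSpace m p) :
    IsSplineC m p a (componentProj Q a u).1 := by
  cases a
  · exact hQ.mem u
  · refine ⟨Subtype.property _, fun v hv => ?_⟩
    rw [ip0, ← massForm_apply hm (componentProj Q true u) ⟨v, hv.1⟩]
    exact hQ.sub_orth u ⟨v, hv.1⟩ hv

theorem vecMul_toMatrix_componentProj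
    (hQ : IsOrthProj (massForm hm p) ((splineSpace0 hm p).comap (splineSpace m p).subtype) Q)
    {ι : Type*} [Fintype ι] [DecidableEq ι]
    {e : Module.Basis ι ℝ (splineSpace m p)} {l : ι → ℝ}
    (he : IsEigenbasis (massForm hm p) (stiffnessForm hm p) e l) (a : Bool)
    {u : splineSpace m p} (hu : IsSplineC m p a u.1) :
    Matrix.vecMul (e.equivFun u) (LinearMap.toMatrix e e (componentProj Q a)) = e.equivFun u := by
  cases a
  · exact hQ.vecMul_toMatrix_of_mem (isMassStiffnessPair_splineSpace hm p) he hu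
  · refine hQ.vecMul_toMatrix_one_sub_of_orth he fun w hw => ?_
    rw [massForm_apply]
    exact hu.2 w.1 hw

theorem isStableMatrix_componentProj
    (hQ : IsOrthProj (massForm hm p) ((splineSpace0 hm p).comap (splineSpace m p).subtype) Q)
    (hp : 1 ≤ p) {ι : Type*} [Fintype ι] [DecidableEq ι]
    {e : Module.Basis ι ℝ (splineSpace m p)} {l : ι → ℝ}
    (he : IsEigenbasis (massForm hm p) (stiffnessForm hm p) e l) (a : Bool) :
    IsStableMatrix l (LinearMap.toMatrix e e (componentProj Q a)) := by
  have hBA := isMassStiffnessPair_splineSpace hm p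
  have hW := isMultiscaleSpace_splineSpace0 hm hm hp le_rfl
  have hh : (0 : ℝ) < 1 / m := by positivity
  cases a
  · exact hQ.isStableMatrix hBA he hh hW
  · exact hQ.isStableMatrix_one_sub hBA he hh hW

end Component

/-- A basis `e` of the spline space, orthonormal in `L²` and diagonalizing the `H¹` seminorm,
together with the matrices `comp a` of the projectors `Q_a` and `coarse` of the `L²`-orthogonal
projector onto the space `S₀` of the coarse mesh. -/
structure SplineFrame (m p : ℕ) where
  card : ℕ
  e : Fin card → ℝ → ℝ
  eig : Fin card → ℝ
  comp : Bool → Matrix (Fin card) (Fin card) ℝ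
  coarse : Matrix (Fin card) (Fin card) ℝ
  eig_nonneg : 0 ≤ eig
  isSpline : ∀ k, IsSpline m p (e k)
  exists_coord : ∀ u, IsSpline m p u → ∃ x : Fin card → ℝ, ∑ k, x k • e k = u
  integral_mul : ∀ i j, ∫ x, e i x * e j x ∂unitMeasure = if i = j then 1 else 0
  integral_deriv_mul : ∀ i j,
    ∫ x, deriv (e i) x * deriv (e j) x ∂unitMeasure = if i = j then eig i else 0
  comp_mem : ∀ a j, IsSplineC m p a (∑ k, comp a k j • e k)
  comp_fix : ∀ a (x : Fin card → ℝ), IsSplineC m p a (∑ k, x k • e k) →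
    Matrix.vecMul x (comp a) = x
  coarse_mem : ∀ j, IsSpline (m / 2) p (∑ k, coarse k j • e k)
  comp_stable : ∀ a, IsStableMatrix eig (comp a)
  coarse_stable : IsStableMatrix eig coarse
  coarse_approx : IsApproxMatrix eig (2 / m) coarse

theorem sum_equivFun_smul_coe {ι E : Type*} [Fintype ι] [AddCommGroup E] [Module ℝ E]
    {S : Submodule ℝ E} (e : Module.Basis ι ℝ S) (u : S) :
    ∑ k, e.equivFun u k • (e k : E) = u := by
  conv_rhs => rw [← e.sum_equivFun u]
  simp only [Submodule.coe_sum, Submodule.coe_smul]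

theorem sum_toMatrix_smul_coe {ι E : Type*} [Fintype ι] [DecidableEq ι] [AddCommGroup E]
    [Module ℝ E] {S : Submodule ℝ E} (e : Module.Basis ι ℝ S) (T : S →ₗ[ℝ] S) (j : ι) :
    ∑ k, LinearMap.toMatrix e e T k j • (e k : E) = T (e j) := by
  simpa only [LinearMap.toMatrix_apply, Module.Basis.equivFun_apply] using
    sum_equivFun_smul_coe e (T (e j))

theorem nonempty_splineFrame (hm : m % 2 = 0) (hm2 : 2 ≤ m) (hp : 1 ≤ p) :
    Nonempty (SplineFrame m p) := by
  have hm0 : 0 < m := by omega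
  have hM0 : 0 < m / 2 := by omega
  have hBA := isMassStiffnessPair_splineSpace hm0 p
  have := finiteDimensional_splineSpace hm0 p
  obtain ⟨e, l, he⟩ := hBA.exists_isEigenbasis
  obtain ⟨Q, hQ⟩ := hBA.exists_isOrthProj ((splineSpace0 hm0 p).comap (splineSpace m p).subtype)
  obtain ⟨P, hP⟩ := hBA.exists_isOrthProj ((splineSpace0 hM0 p).comap (splineSpace m p).subtype)
  have hc := isMultiscaleSpace_splineSpace0 hm0 hM0 hp (splineSpace_half_le hm p)
  have mesh : (1 : ℝ) / (m / 2 : ℕ) = 2 / m := by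
    rw [Nat.cast_div_charZero (Nat.dvd_of_mod_eq_zero hm), Nat.cast_ofNat, one_div_div]
  have hh : (0 : ℝ) < 2 / m := by positivity
  rw [mesh] at hc
  exact ⟨{
    card := _
    e := fun k => (e k).1
    eig := l
    comp := fun a => LinearMap.toMatrix e e (componentProj Q a)
    coarse := LinearMap.toMatrix e e P
    eig_nonneg := he.nonneg
    isSpline := fun k => (e k).2
    exists_coord := fun u hu => ⟨_, sum_equivFun_smul_coe e ⟨u, hu⟩⟩
    integral_mul := fun i j => by rw [← massForm_apply hm0, he.mass]
    integral_deriv_mul := fun i j => by rw [← stiffnessForm_apply hm0, he.stiff]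
    comp_mem := fun a j => by
      rw [sum_toMatrix_smul_coe]; exact isSplineC_componentProj hQ a (e j)
    comp_fix := fun a x hx => by
      obtain ⟨u, rfl⟩ := e.equivFun.surjective x
      rw [sum_equivFun_smul_coe] at hx
      exact vecMul_toMatrix_componentProj hQ he a hx
    coarse_mem := fun j => by rw [sum_toMatrix_smul_coe]; exact (hP.mem (e j)).1
    comp_stable := isStableMatrix_componentProj hQ hp he
    coarse_stable := hP.isStableMatrix hBA he hh hc
    coarse_approx := hP.isApproxMatrix hBA he hh hc }⟩

end SplineSpace

/-! ### Tensor products of matrices -/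

section Tensor

variable {d : ℕ} {ι : Type*}

theorem sum_fin_succ [Fintype ι] (f : (Fin (d + 1) → ι) → ℝ) :
    ∑ k, f k = ∑ k₀, ∑ k', f (Fin.cons k₀ k') := by
  rw [← Fintype.sum_prod_type']
  exact (Fintype.sum_equiv (Fin.consEquiv fun _ => ι) _ _ fun _ => rfl).symm

/-- The Kronecker product of the matrices `B i`. -/
def tensorMatrix (B : Fin d → Matrix ι ι ℝ) : Matrix (Fin d → ι) (Fin d → ι) ℝ :=
  Matrix.of fun k j => ∏ i, B i (k i) (j i)

/-- The product weight `k ↦ ∏ᵢ wᵢ(kᵢ)`. -/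
def tensorWeight (w : Fin d → ι → ℝ) (k : Fin d → ι) : ℝ := ∏ i, w i (k i)

theorem tensorWeight_nonneg {w : Fin d → ι → ℝ} (hw : 0 ≤ w) : 0 ≤ tensorWeight w :=
  fun k => Finset.prod_nonneg fun i _ => hw i (k i)

theorem tensorWeight_mul (v w : Fin d → ι → ℝ) :
    tensorWeight (v * w) = tensorWeight v * tensorWeight w :=
  funext fun _ => Finset.prod_mul_distrib

theorem tensorWeight_one : tensorWeight (1 : Fin d → ι → ℝ) = 1 :=
  funext fun _ => Finset.prod_const_one

theorem tensorMatrix_one [DecidableEq ι] : tensorMatrix (1 : Fin d → Matrix ι ι ℝ) = 1 := by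
  ext k j
  simp [tensorMatrix, Matrix.one_apply, Finset.prod_ite_zero, funext_iff]

/-- The `t`-th term of the telescoping sum for `1 - P₁ ⊗ ⋯ ⊗ P_d`. -/
def telescopeFactor [DecidableEq ι] (P : Fin d → Matrix ι ι ℝ) (t i : Fin d) : Matrix ι ι ℝ :=
  if i < t then P i else if i = t then 1 - P i else 1

theorem one_sub_tensorMatrix [DecidableEq ι] (P : Fin d → Matrix ι ι ℝ) :
    1 - tensorMatrix P = ∑ t, tensorMatrix (telescopeFactor P t) := by
  rw [← tensorMatrix_one]
  ext k j
  let one (i : Fin d) : ℝ := (1 : Matrix ι ι ℝ) (k i) (j i)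
  let Q (i : Fin d) : ℝ := P i (k i) (j i)
  have split (t : Fin d) : ∏ i, telescopeFactor P t i (k i) (j i) =
      (one t - Q t) * (∏ i with i < t, Q i) * ∏ i with t < i, one i := by
    have factor (i : Fin d) : telescopeFactor P t i (k i) (j i) =
        (if i = t then one i - Q i else 1) * (if i < t then Q i else 1) *
          if t < i then one i else 1 := by
      rcases lt_trichotomy i t with h | rfl | h
      · simp [telescopeFactor, h, h.ne, h.not_gt, Q]
      · simp [telescopeFactor, one, Q]
      · simp [telescopeFactor, h, h.ne', h.not_gt, one]
    simp only [factor, Finset.prod_mul_distrib, Finset.prod_ite_eq', Finset.mem_univ, if_true,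
      Finset.prod_filter]
  have telescope := Finset.prod_sub_ordered Finset.univ one fun i => one i - Q i
  simp only [sub_sub_cancel] at telescope
  simp only [Matrix.sub_apply, Matrix.sum_apply, tensorMatrix, Matrix.of_apply, split]
  change ∏ i, one i - ∏ i, Q i = _
  rw [telescope, sub_sub_cancel]

/-- The factors of the weights of the tensor-product form `a`: `some i` stands for
`∫ ∂ᵢu ∂ᵢv`, and `none` for `∫ u v`. -/
def energyFactor (l : ι → ℝ) (s : Option (Fin d)) (i : Fin d) : ι → ℝ := if s = some i then l else 1

/-- The diagonal of the form `a` in the tensor-product eigenbasis, namely `k ↦ 1 + ∑ᵢ l(kᵢ)`. -/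
def energyWeight (d : ℕ) (l : ι → ℝ) : (Fin d → ι) → ℝ :=
  ∑ s : Option (Fin d), tensorWeight (energyFactor l s)

variable {l : ι → ℝ}

theorem energyFactor_mem (l : ι → ℝ) (s : Option (Fin d)) (i : Fin d) :
    energyFactor l s i ∈ ({1, l} : Set (ι → ℝ)) := by
  unfold energyFactor
  split_ifs
  exacts [.inr rfl, .inl rfl]

theorem energyFactor_nonneg (hl : 0 ≤ l) (s : Option (Fin d)) : 0 ≤ energyFactor l s := fun i => by
  rcases energyFactor_mem l s i with h | h <;> rw [h]
  exacts [zero_le_one, hl]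

theorem tensorWeight_energyFactor_le (hl : 0 ≤ l) (s : Option (Fin d)) :
    tensorWeight (energyFactor l s) ≤ energyWeight d l :=
  Finset.single_le_sum (fun t _ => tensorWeight_nonneg (energyFactor_nonneg hl t))
    (Finset.mem_univ s)

theorem energyWeight_pos (hl : 0 ≤ l) (k : Fin d → ι) : 0 < energyWeight d l k :=
  zero_lt_one.trans_le <| by
    have le := tensorWeight_energyFactor_le hl none k
    rwa [show energyFactor l (none : Option (Fin d)) = 1 from rfl, tensorWeight_one] at le

variable [Fintype ι]

theorem weightedSq_tensorWeight_cons (w : Fin (d + 1) → ι → ℝ) (x : (Fin (d + 1) → ι) → ℝ) :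
    weightedSq (tensorWeight w) x =
      ∑ k', tensorWeight (Fin.tail w) k' * weightedSq (w 0) fun k₀ => x (Fin.cons k₀ k') := by
  simp only [weightedSq, Finset.mul_sum]
  rw [sum_fin_succ, Finset.sum_comm]
  refine Finset.sum_congr rfl fun k' _ => Finset.sum_congr rfl fun k₀ _ => ?_
  simp only [tensorWeight, Fin.prod_univ_succ, Fin.cons_zero, Fin.cons_succ, Fin.tail]
  ring

theorem tensorMatrix_mulVec_cons (B : Fin (d + 1) → Matrix ι ι ℝ) (x : (Fin (d + 1) → ι) → ℝ)
    (k₀ : ι) (k' : Fin d → ι) :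
    (tensorMatrix B).mulVec x (Fin.cons k₀ k') = (B 0).mulVec
      (fun j₀ => (tensorMatrix (Fin.tail B)).mulVec (fun j' => x (Fin.cons j₀ j')) k') k₀ := by
  simp only [Matrix.mulVec, dotProduct, Finset.mul_sum]
  rw [sum_fin_succ]
  refine Finset.sum_congr rfl fun j₀ _ => Finset.sum_congr rfl fun j' _ => ?_
  simp only [tensorMatrix, Matrix.of_apply, Fin.prod_univ_succ, Fin.cons_zero, Fin.cons_succ,
    Fin.tail]
  ring

theorem MatrixBound.tensorMatrix {w w' : Fin d → ι → ℝ} {C : Fin d → ℝ}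
    {B : Fin d → Matrix ι ι ℝ} (hw : 0 ≤ w) (hw' : 0 ≤ w') (hC : 0 ≤ C)
    (h : ∀ i, MatrixBound (w i) (w' i) (C i) (B i)) :
    MatrixBound (tensorWeight w) (tensorWeight w') (∏ i, C i) (tensorMatrix B) := by
  induction d with
  | zero =>
    intro x
    simp [weightedSq, tensorWeight, SplineMG.tensorMatrix, Matrix.mulVec, dotProduct]
  | succ d ih =>
    intro x
    have tail := ih (w := Fin.tail w) (w' := Fin.tail w') (C := Fin.tail C) (B := Fin.tail B)
      (fun i => hw i.succ) (fun i => hw' i.succ) (fun i => hC i.succ) fun i => h i.succ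
    let y (j₀ : ι) := (SplineMG.tensorMatrix (Fin.tail B)).mulVec fun j' => x (Fin.cons j₀ j')
    calc weightedSq (tensorWeight w) ((SplineMG.tensorMatrix B).mulVec x)
        = ∑ k', tensorWeight (Fin.tail w) k' *
            weightedSq (w 0) ((B 0).mulVec fun j₀ => y j₀ k') := by
          simp only [weightedSq_tensorWeight_cons, tensorMatrix_mulVec_cons, y]
      _ ≤ ∑ k', tensorWeight (Fin.tail w) k' *
            (C 0 * weightedSq (w' 0) fun j₀ => y j₀ k') := by
          gcongr with k'
          · exact tensorWeight_nonneg (fun i => hw i.succ) k'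
          · exact h 0 _
      _ = C 0 * ∑ j₀, w' 0 j₀ * weightedSq (tensorWeight (Fin.tail w)) (y j₀) := by
          simp only [weightedSq, Finset.mul_sum]
          rw [Finset.sum_comm]
          refine Finset.sum_congr rfl fun j₀ _ => Finset.sum_congr rfl fun k' _ => by ring
      _ ≤ C 0 * ∑ j₀, w' 0 j₀ * ((∏ i, Fin.tail C i) *
            weightedSq (tensorWeight (Fin.tail w')) fun j' => x (Fin.cons j₀ j')) := by
          gcongr with j₀
          · exact hC 0
          · exact hw' 0 j₀
          · exact tail _
      _ = (∏ i, C i) * weightedSq (tensorWeight w') x := by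
          rw [weightedSq_tensorWeight_cons, Fin.prod_univ_succ]
          simp only [weightedSq, Finset.mul_sum, Fin.tail]
          rw [Finset.sum_comm]
          refine Finset.sum_congr rfl fun j₀ _ => Finset.sum_congr rfl fun k' _ => by ring

theorem matrixBound_tensorMatrix_of_isStableMatrix {B : Fin d → Matrix ι ι ℝ} (hl : 0 ≤ l)
    (hB : ∀ i, IsStableMatrix l (B i)) (s : Option (Fin d)) :
    MatrixBound (tensorWeight (energyFactor l s)) (tensorWeight (energyFactor l s)) (26 ^ d)
      (tensorMatrix B) := by
  simpa using MatrixBound.tensorMatrix (C := fun _ => 26) (energyFactor_nonneg hl s)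
    (energyFactor_nonneg hl s) (fun _ => by norm_num) fun i => hB i _ (energyFactor_mem l s i)

theorem matrixBound_energyWeight_of_isStableMatrix {B : Fin d → Matrix ι ι ℝ} (hl : 0 ≤ l)
    (hB : ∀ i, IsStableMatrix l (B i)) :
    MatrixBound (energyWeight d l) (energyWeight d l) (26 ^ d) (tensorMatrix B) :=
  MatrixBound.sum_weight _ fun s _ => matrixBound_tensorMatrix_of_isStableMatrix hl hB s

theorem matrixBound_one_of_isStableMatrix {B : Fin d → Matrix ι ι ℝ} (hl : 0 ≤ l)
    (hB : ∀ i, IsStableMatrix l (B i)) : MatrixBound 1 1 (26 ^ d) (tensorMatrix B) := by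
  have bound := matrixBound_tensorMatrix_of_isStableMatrix hl hB none
  rwa [show energyFactor l (none : Option (Fin d)) = 1 from rfl, tensorWeight_one] at bound

variable [DecidableEq ι] {h : ℝ} {P : Matrix ι ι ℝ}

theorem matrixBound_telescopeFactor (hl : 0 ≤ l) (stable : IsStableMatrix l P)
    (approx : IsApproxMatrix l h P) (t i : Fin d) {v : ι → ℝ} (hv : v ∈ ({1, l} : Set (ι → ℝ))) :
    MatrixBound v (v * energyFactor l (some t) i) (if i = t then 26 * h ^ 2 else 26)
      (telescopeFactor (fun _ => P) t i) := by
  have hv0 : 0 ≤ v := by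
    rcases hv with rfl | rfl
    exacts [zero_le_one, hl]
  rcases lt_trichotomy i t with hit | rfl | hit
  · simpa [energyFactor, telescopeFactor, hit, hit.ne, hit.ne'] using stable v hv
  · simpa [energyFactor, telescopeFactor] using approx v hv
  · simpa [energyFactor, telescopeFactor, hit.ne, hit.ne', hit.not_gt] using
      (MatrixBound.one v).mono (by norm_num : (1 : ℝ) ≤ 26) hv0

theorem matrixBound_tensorMatrix_telescopeFactor (hl : 0 ≤ l) (stable : IsStableMatrix l P)
    (approx : IsApproxMatrix l h P) (t : Fin d) :
    MatrixBound (energyWeight d l) (energyWeight d l * energyWeight d l) (26 ^ d * h ^ 2)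
      (tensorMatrix (telescopeFactor (fun _ => P) t)) := by
  have constant : ∏ i : Fin d, (if i = t then 26 * h ^ 2 else 26) = 26 ^ d * h ^ 2 := by
    have factor (i : Fin d) :
        (if i = t then 26 * h ^ 2 else 26) = 26 * if i = t then h ^ 2 else 1 := by
      split_ifs <;> ring
    rw [Finset.prod_congr rfl fun i _ => factor i, Finset.prod_mul_distrib, Finset.prod_const,
      Finset.prod_ite_eq', if_pos (Finset.mem_univ t), Finset.card_univ, Fintype.card_fin]
  have bound (s : Option (Fin d)) := MatrixBound.tensorMatrix (energyFactor_nonneg hl s)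
    (mul_nonneg (energyFactor_nonneg hl s) (energyFactor_nonneg hl (some t)))
    (fun i => by positivity) fun i =>
      matrixBound_telescopeFactor hl stable approx t i (energyFactor_mem l s i)
  simp only [constant, tensorWeight_mul] at bound
  have sum := MatrixBound.sum_weight Finset.univ fun s _ => bound s
  rw [← Finset.sum_mul] at sum
  exact sum.mono_weight (by positivity) fun k =>
    mul_le_mul_of_nonneg_left (tensorWeight_energyFactor_le hl (some t) k)
      (energyWeight_pos hl k).le

theorem matrixBound_one_sub_tensorMatrix (hl : 0 ≤ l) (stable : IsStableMatrix l P)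
    (approx : IsApproxMatrix l h P) :
    MatrixBound (energyWeight d l) (energyWeight d l * energyWeight d l)
      (d ^ 2 * (26 ^ d * h ^ 2)) (1 - tensorMatrix fun _ : Fin d => P) := by
  rw [one_sub_tensorMatrix]
  simpa using MatrixBound.sum_matrix Finset.univ (fun k => (energyWeight_pos hl k).le)
    fun t _ => matrixBound_tensorMatrix_telescopeFactor hl stable approx t

/-- The duality argument of Aubin and Nitsche, for the dual problem solved by `c / a`. -/
theorem weightedSq_one_le_of_orth {a c : ι → ℝ} {C : ℝ} {T : Matrix ι ι ℝ} (ha : ∀ k, 0 < a k)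
    (hC : 0 ≤ C) (hT : MatrixBound a (a * a) C (1 - T))
    (orth : ∀ y, ∑ k, a k * (c k * T.mulVec y k) = 0) :
    weightedSq 1 c ≤ C * weightedSq a c := by
  let y (k : ι) : ℝ := c k / a k
  let r := (1 - T).mulVec y
  have dual : weightedSq 1 c = ∑ k, a k * (c k * r k) := by
    have pair : weightedSq 1 c = ∑ k, a k * (c k * y k) :=
      Finset.sum_congr rfl fun k _ => by
        have := (ha k).ne'
        simp only [Pi.one_apply, y]; field_simp
    simp only [r, Matrix.sub_mulVec, Matrix.one_mulVec, Pi.sub_apply, mul_sub,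
      Finset.sum_sub_distrib, orth, sub_zero, pair]
  have cauchy : (∑ k, a k * (c k * r k)) ^ 2 ≤ weightedSq a c * weightedSq a r :=
    Finset.sum_sq_le_sum_mul_sum_of_sq_le_mul _
      (fun k _ => mul_nonneg (ha k).le (sq_nonneg _))
      (fun k _ => mul_nonneg (ha k).le (sq_nonneg _)) fun k _ => by ring_nf; rfl
  have bound : weightedSq a r ≤ C * weightedSq 1 c := (hT y).trans_eq <| by
    congr 1
    exact Finset.sum_congr rfl fun k _ => by
      have := (ha k).ne'
      simp only [Pi.one_apply, Pi.mul_apply, y]; field_simp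
  have energy_nonneg : 0 ≤ weightedSq a c := weightedSq_nonneg (fun k => (ha k).le) c
  have sq_le : weightedSq 1 c ^ 2 ≤ C * weightedSq a c * weightedSq 1 c :=
    calc weightedSq 1 c ^ 2 ≤ weightedSq a c * weightedSq a r := by rw [dual]; exact cauchy
      _ ≤ weightedSq a c * (C * weightedSq 1 c) := by gcongr
      _ = C * weightedSq a c * weightedSq 1 c := by ring
  rcases (weightedSq_nonneg zero_le_one c).eq_or_lt with zero | pos
  · rw [← zero]; positivity
  · exact le_of_mul_le_mul_right (by rwa [← sq]) pos

end Tensor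

/-! ### Linear combinations of product functions -/

section TensorFun

variable {d : ℕ} {ι : Type*} {μ : Measure ℝ} [SigmaFinite μ] {g : Fin d → ι → ℝ → ℝ}

theorem integrable_prod_mul_prod (hg : ∀ i k, MemLp (g i k) 2 μ) (k k' : Fin d → ι) :
    Integrable (fun x : Fin d → ℝ => (∏ i, g i (k i) (x i)) * ∏ i, g i (k' i) (x i))
      (Measure.pi fun _ => μ) := by
  simp only [← Finset.prod_mul_distrib]
  exact Integrable.fintype_prod fun i => (hg i (k i)).integrable_mul (hg i (k' i))

theorem integral_prod_mul_prod [DecidableEq ι] {w : Fin d → ι → ℝ}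
    (orth : ∀ i k k', ∫ t, g i k t * g i k' t ∂μ = if k = k' then w i k else 0)
    (k k' : Fin d → ι) :
    ∫ x, (∏ i, g i (k i) (x i)) * ∏ i, g i (k' i) (x i) ∂(Measure.pi fun _ => μ) =
      if k = k' then tensorWeight w k else 0 := by
  simp only [← Finset.prod_mul_distrib]
  rw [integral_fintype_prod_eq_prod fun i t => g i (k i) t * g i (k' i) t]
  simp [orth, Finset.prod_ite_zero, funext_iff, tensorWeight]

variable [Fintype ι]

/-- The linear combination of the products `x ↦ ∏ᵢ g i (k i) (xᵢ)` with coefficients `c k`. -/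
def tensorFun (g : Fin d → ι → ℝ → ℝ) : ((Fin d → ι) → ℝ) →ₗ[ℝ] (Fin d → ℝ) → ℝ :=
  Fintype.linearCombination ℝ fun k x => ∏ i, g i (k i) (x i)

theorem tensorFun_apply (g : Fin d → ι → ℝ → ℝ) (c : (Fin d → ι) → ℝ) (x : Fin d → ℝ) :
    tensorFun g c x = ∑ k, c k * ∏ i, g i (k i) (x i) := by
  simp [tensorFun, Fintype.linearCombination_apply]

theorem tensorFun_tensorWeight (g : Fin d → ι → ℝ → ℝ) (y : Fin d → ι → ℝ) :
    tensorFun g (tensorWeight y) = fun x => ∏ i, (∑ k, y i k • g i k) (x i) := by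
  funext x
  simp only [tensorFun_apply, tensorWeight, Finset.sum_apply, Pi.smul_apply, smul_eq_mul,
    Finset.prod_univ_sum, Fintype.piFinset_univ, Finset.prod_mul_distrib]

theorem tensorMatrix_mulVec (B : Fin d → Matrix ι ι ℝ) (c : (Fin d → ι) → ℝ) :
    (tensorMatrix B).mulVec c = ∑ j, c j • tensorWeight fun i k => B i k (j i) := by
  funext k
  simp only [Matrix.mulVec, dotProduct, Finset.sum_apply, Pi.smul_apply, smul_eq_mul,
    tensorMatrix, Matrix.of_apply, tensorWeight, mul_comm]

theorem vecMul_tensorWeight (y : Fin d → ι → ℝ) (B : Fin d → Matrix ι ι ℝ) :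
    Matrix.vecMul (tensorWeight y) (tensorMatrix B) =
      tensorWeight fun i => Matrix.vecMul (y i) (B i) := by
  funext j
  simp only [Matrix.vecMul, dotProduct, tensorWeight, tensorMatrix, Matrix.of_apply,
    Finset.prod_univ_sum, Fintype.piFinset_univ, Finset.prod_mul_distrib]

theorem hasDerivAt_tensorFun_update {g : Fin d → ι → ℝ → ℝ} {i : Fin d} {g' : ι → ℝ → ℝ}
    {x : Fin d → ℝ} (hg : ∀ k, HasDerivAt (g i k) (g' k (x i)) (x i)) (c : (Fin d → ι) → ℝ) :
    HasDerivAt (fun t => tensorFun g c (Function.update x i t))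
      (tensorFun (Function.update g i g') c x) (x i) := by
  simp only [tensorFun_apply]
  refine HasDerivAt.fun_sum fun k _ => HasDerivAt.const_mul _ ?_
  simp only [Function.apply_update (fun j => g j (k j)) x i,
    Function.apply_update (fun j (f : ι → ℝ → ℝ) => f (k j) (x j)) g i,
    Finset.prod_update_of_mem (Finset.mem_univ i)]
  exact (hg (k i)).mul_const _

theorem tensorFun_mul_tensorFun (g : Fin d → ι → ℝ → ℝ) (c c' : (Fin d → ι) → ℝ)
    (x : Fin d → ℝ) :
    tensorFun g c x * tensorFun g c' x =
      ∑ k, ∑ k', c k * c' k' * ((∏ i, g i (k i) (x i)) * ∏ i, g i (k' i) (x i)) := by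
  rw [tensorFun_apply, tensorFun_apply, Finset.sum_mul_sum]
  exact Finset.sum_congr rfl fun k _ => Finset.sum_congr rfl fun k' _ => mul_mul_mul_comm _ _ _ _

theorem integrable_tensorFun_mul (hg : ∀ i k, MemLp (g i k) 2 μ) (c c' : (Fin d → ι) → ℝ) :
    Integrable (fun x => tensorFun g c x * tensorFun g c' x) (Measure.pi fun _ => μ) := by
  simp only [tensorFun_mul_tensorFun]
  exact integrable_finsetSum _ fun k _ => integrable_finsetSum _ fun k' _ =>
    (integrable_prod_mul_prod hg k k').const_mul _

theorem integral_tensorFun_mul [DecidableEq ι] {w : Fin d → ι → ℝ}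
    (hg : ∀ i k, MemLp (g i k) 2 μ)
    (orth : ∀ i k k', ∫ t, g i k t * g i k' t ∂μ = if k = k' then w i k else 0)
    (c c' : (Fin d → ι) → ℝ) :
    ∫ x, tensorFun g c x * tensorFun g c' x ∂(Measure.pi fun _ => μ) =
      ∑ k, tensorWeight w k * (c k * c' k) := by
  have integrable (k k' : Fin d → ι) := (integrable_prod_mul_prod hg k k').const_mul (c k * c' k')
  simp only [tensorFun_mul_tensorFun]
  rw [integral_finsetSum _ fun k _ => integrable_finsetSum _ fun k' _ => integrable k k']
  refine Finset.sum_congr rfl fun k _ => ?_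
  rw [integral_finsetSum _ fun k' _ => integrable k k']
  simp only [integral_const_mul, integral_prod_mul_prod orth, mul_ite, mul_zero,
    Finset.sum_ite_eq, Finset.mem_univ, if_true, mul_comm]

end TensorFun

/-! ### Tensor-product splines in coordinates -/

theorem IsSplineC.isSpline {m p : ℕ} {a : Bool} {u : ℝ → ℝ} (hu : IsSplineC m p a u) :
    IsSpline m p u := by
  cases a
  exacts [hu.1, hu.1]

theorem tensorSplineCoarse_le {d m p : ℕ} (hm : m % 2 = 0) :
    TensorSplineCoarse d m p ≤ TensorSpline d m p :=
  Submodule.span_mono fun _ ⟨f, hf, hu⟩ => ⟨f, fun i => splineSpace_half_le hm p (hf i), hu⟩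

theorem volume_restrict_cube (d : ℕ) :
    volume.restrict (cube d) = Measure.pi fun _ : Fin d => unitMeasure := by
  rw [volume_pi]
  exact Measure.restrict_pi_pi (fun _ => volume) fun _ => Ioo (0 : ℝ) 1

namespace SplineFrame

variable {d m p : ℕ} (F : SplineFrame m p)

/-- The element of `S^d` with coordinates `c` in the tensor-product basis of the frame. -/
def tensorSpline (d : ℕ) : ((Fin d → Fin F.card) → ℝ) →ₗ[ℝ] (Fin d → ℝ) → ℝ :=
  tensorFun fun _ => F.e

theorem exists_coord_prod {f : Fin d → ℝ → ℝ} (hf : ∀ i, IsSpline m p (f i)) :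
    ∃ y : Fin d → Fin F.card → ℝ, (∀ i, ∑ k, y i k • F.e k = f i) ∧
      F.tensorSpline d (tensorWeight y) = fun x => ∏ i, f i (x i) := by
  choose y hy using fun i => F.exists_coord (f i) (hf i)
  exact ⟨y, hy, by simp only [tensorSpline, tensorFun_tensorWeight, hy]⟩

theorem exists_tensorSpline_eq {u : (Fin d → ℝ) → ℝ} (hu : u ∈ TensorSpline d m p) :
    ∃ c, F.tensorSpline d c = u := by
  refine (Submodule.span_le (p := LinearMap.range (F.tensorSpline d))).2 ?_ hu
  rintro _ ⟨f, hf, rfl⟩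
  obtain ⟨y, -, hy⟩ := F.exists_coord_prod hf
  exact ⟨_, hy⟩

/-- The coordinate matrix of the `L²` projector onto `S_α`. -/
def compMatrix (α : Fin d → Bool) : Matrix (Fin d → Fin F.card) (Fin d → Fin F.card) ℝ :=
  tensorMatrix fun i => F.comp (α i)

/-- The coordinate matrix of the tensor product of the univariate coarse-grid projectors. -/
def coarseMatrix (d : ℕ) : Matrix (Fin d → Fin F.card) (Fin d → Fin F.card) ℝ :=
  tensorMatrix fun _ => F.coarse

theorem exists_vecMul_compMatrix_eq {α : Fin d → Bool} {u : (Fin d → ℝ) → ℝ}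
    (hu : u ∈ TensorSplineSub d m p α) :
    ∃ c, Matrix.vecMul c (F.compMatrix α) = c ∧ F.tensorSpline d c = u := by
  let fixed := LinearMap.eqLocus (F.compMatrix α).vecMulLinear LinearMap.id
  refine (Submodule.span_le (p := fixed.map (F.tensorSpline d))).2 ?_ hu
  rintro _ ⟨f, hf, rfl⟩
  obtain ⟨y, hy, hyf⟩ := F.exists_coord_prod fun i => (hf i).isSpline
  refine ⟨tensorWeight y, ?_, hyf⟩
  have fix (i : Fin d) : Matrix.vecMul (y i) (F.comp (α i)) = y i :=
    F.comp_fix (α i) (y i) ((hy i).symm ▸ hf i)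
  change Matrix.vecMul (tensorWeight y) (F.compMatrix α) = tensorWeight y
  simp only [compMatrix, vecMul_tensorWeight, fix]

theorem tensorSpline_tensorMatrix_mulVec (B : Fin d → Matrix (Fin F.card) (Fin F.card) ℝ)
    (c : (Fin d → Fin F.card) → ℝ) :
    F.tensorSpline d ((tensorMatrix B).mulVec c) =
      ∑ j, c j • fun x => ∏ i, (∑ k, B i k (j i) • F.e k) (x i) := by
  simp only [tensorMatrix_mulVec, map_sum, map_smul, tensorSpline, tensorFun_tensorWeight]

theorem tensorSpline_compMatrix_mem (α : Fin d → Bool) (c : (Fin d → Fin F.card) → ℝ) :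
    F.tensorSpline d ((F.compMatrix α).mulVec c) ∈ TensorSplineSub d m p α := by
  rw [compMatrix, tensorSpline_tensorMatrix_mulVec]
  exact Submodule.sum_mem _ fun j _ => Submodule.smul_mem _ _ <| Submodule.subset_span
    ⟨_, fun i => F.comp_mem (α i) (j i), rfl⟩

theorem tensorSpline_coarseMatrix_mem (c : (Fin d → Fin F.card) → ℝ) :
    F.tensorSpline d ((F.coarseMatrix d).mulVec c) ∈ TensorSplineCoarse d m p := by
  rw [coarseMatrix, tensorSpline_tensorMatrix_mulVec]
  exact Submodule.sum_mem _ fun j _ => Submodule.smul_mem _ _ <| Submodule.subset_span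
    ⟨_, fun i => F.coarse_mem (j i), rfl⟩

/-- The factors of the `s`-th partial derivatives of the tensor-product basis functions; `none`
stands for no derivative, as in `energyFactor`. -/
def partialFactor (s : Option (Fin d)) (i : Fin d) : Fin F.card → ℝ → ℝ :=
  if s = some i then fun k => deriv (F.e k) else F.e

theorem partialFactor_some (i : Fin d) :
    F.partialFactor (some i) = Function.update (fun _ => F.e) i fun k => deriv (F.e k) := by
  funext j
  simp only [partialFactor, Option.some_inj, Function.update_apply, eq_comm]

theorem memLp_partialFactor (hm : 0 < m) (s : Option (Fin d)) (i : Fin d) (k : Fin F.card) :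
    MemLp (F.partialFactor s i k) 2 unitMeasure := by
  unfold partialFactor
  split_ifs
  exacts [(F.isSpline k).memLp_deriv hm, (F.isSpline k).memLp hm]

theorem integral_partialFactor_mul (s : Option (Fin d)) (i : Fin d) (k k' : Fin F.card) :
    ∫ t, F.partialFactor s i k t * F.partialFactor s i k' t ∂unitMeasure =
      if k = k' then energyFactor F.eig s i k else 0 := by
  unfold partialFactor energyFactor
  split_ifs with hs hk hk
  · exact (F.integral_deriv_mul k k').trans (if_pos hk)
  · exact (F.integral_deriv_mul k k').trans (if_neg hk)
  · exact (F.integral_mul k k').trans (if_pos hk)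
  · exact (F.integral_mul k k').trans (if_neg hk)

theorem pd_tensorSpline (hm : 0 < m) (c : (Fin d → Fin F.card) → ℝ) {i : Fin d} {x : Fin d → ℝ}
    (hx : x i ∉ knots m) :
    pd d i (F.tensorSpline d c) x = tensorFun (F.partialFactor (some i)) c x := by
  rw [partialFactor_some]
  exact (hasDerivAt_tensorFun_update (fun k => (F.isSpline k).hasDerivAt hm hx) c).deriv

theorem ipd_tensorSpline (hm : 0 < m) (c c' : (Fin d → Fin F.card) → ℝ) :
    ipd d (F.tensorSpline d c) (F.tensorSpline d c') = c ⬝ᵥ c' := by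
  have integral := integral_tensorFun_mul (F.memLp_partialFactor hm (none : Option (Fin d)))
    (F.integral_partialFactor_mul none) c c'
  rw [show energyFactor F.eig (none : Option (Fin d)) = 1 from rfl, tensorWeight_one] at integral
  simp only [Pi.one_apply, one_mul] at integral
  rwa [ipd, volume_restrict_cube]

theorem l2normSqD_tensorSpline (hm : 0 < m) (c : (Fin d → Fin F.card) → ℝ) :
    l2normSqD d (F.tensorSpline d c) = weightedSq 1 c := by
  simpa only [ipd, l2normSqD, ← sq, dotProduct, weightedSq, Pi.one_apply, one_mul] using
    F.ipd_tensorSpline hm c c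

theorem aForm_tensorSpline (hm : 0 < m) (c c' : (Fin d → Fin F.card) → ℝ) :
    aForm d (F.tensorSpline d c) (F.tensorSpline d c') =
      ∑ k, energyWeight d F.eig k * (c k * c' k) := by
  let partials (s : Option (Fin d)) := tensorFun (F.partialFactor s)
  have ae_notMem_knots : ∀ᵐ x ∂(Measure.pi fun _ : Fin d => unitMeasure), ∀ i, x i ∉ knots m :=
    Filter.eventually_all.2 fun i =>
      (Measure.tendsto_eval_ae_ae (μ := fun _ => unitMeasure) (i := i)).eventually
      (ae_restrict_of_ae (ae_notMem_knots m))
  have integrand : ∀ᵐ x ∂(Measure.pi fun _ : Fin d => unitMeasure),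
      (∑ i, pd d i (F.tensorSpline d c) x * pd d i (F.tensorSpline d c') x) +
        F.tensorSpline d c x * F.tensorSpline d c' x = ∑ s, partials s c x * partials s c' x := by
    filter_upwards [ae_notMem_knots] with x hx
    rw [Fintype.sum_option, add_comm]
    simp only [F.pd_tensorSpline hm _ (hx _)]
    rfl
  rw [aForm, volume_restrict_cube, integral_congr_ae integrand, integral_finsetSum _ fun s _ =>
    integrable_tensorFun_mul (F.memLp_partialFactor hm s) c c']
  simp only [integral_tensorFun_mul (F.memLp_partialFactor hm _)
    (F.integral_partialFactor_mul _), energyWeight, Finset.sum_apply, Finset.sum_mul]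
  exact Finset.sum_comm

theorem aForm_tensorSpline_self (hm : 0 < m) (c : (Fin d → Fin F.card) → ℝ) :
    aForm d (F.tensorSpline d c) (F.tensorSpline d c) = weightedSq (energyWeight d F.eig) c := by
  simp only [F.aForm_tensorSpline hm, weightedSq, sq]

theorem eq_tensorSpline_of_isL2ProjSub (hm : 0 < m) {α : Fin d → Bool}
    {c : (Fin d → Fin F.card) → ℝ} {z : (Fin d → ℝ) → ℝ}
    (hz : IsL2ProjSub d m p α (F.tensorSpline d c) z) :
    z = F.tensorSpline d ((F.compMatrix α).mulVec c) := by
  obtain ⟨z_mem, z_orth⟩ := hz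
  have diff_mem := Submodule.sub_mem _ z_mem (F.tensorSpline_compMatrix_mem α c)
  obtain ⟨y, y_fixed, hy⟩ := F.exists_vecMul_compMatrix_eq diff_mem
  have orth := z_orth _ diff_mem
  rw [← hy, show F.tensorSpline d c - z = F.tensorSpline d (c - (y + (F.compMatrix α).mulVec c)) by
      rw [map_sub, map_add, hy, sub_add_cancel],
    F.ipd_tensorSpline hm, dotProduct_comm, dotProduct_sub, dotProduct_add,
    Matrix.dotProduct_mulVec, y_fixed, sub_add_cancel_right, neg_eq_zero,
    dotProduct_self_eq_zero] at orth
  rw [orth, map_zero] at hy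
  exact sub_eq_zero.1 hy.symm

end SplineFrame

/-! ### The coarse-grid error -/

theorem weightedSq_sub_le_of_orth {ι : Type*} [Fintype ι] {a x y : ι → ℝ} (ha : 0 ≤ a)
    (orth : ∑ k, a k * ((x - y) k * y k) = 0) : weightedSq a (x - y) ≤ weightedSq a x := by
  have pythagoras : weightedSq a x =
      weightedSq a (x - y) + 2 * ∑ k, a k * ((x - y) k * y k) + weightedSq a y := by
    simp only [weightedSq, Finset.mul_sum, ← Finset.sum_add_distrib, Pi.sub_apply]
    exact Finset.sum_congr rfl fun k _ => by ring
  rw [pythagoras, orth]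
  linarith [weightedSq_nonneg ha y]

namespace SplineFrame

variable {d m p : ℕ} (F : SplineFrame m p)

theorem aForm_add_l2normSqD_compMatrix_le (hm : 0 < m) (α : Fin d → Bool)
    (c : (Fin d → Fin F.card) → ℝ) {t : ℝ} (ht : 0 ≤ t) :
    aForm d (F.tensorSpline d ((F.compMatrix α).mulVec c))
        (F.tensorSpline d ((F.compMatrix α).mulVec c)) +
      t * l2normSqD d (F.tensorSpline d ((F.compMatrix α).mulVec c)) ≤
    26 ^ d * (aForm d (F.tensorSpline d c) (F.tensorSpline d c) +
      t * l2normSqD d (F.tensorSpline d c)) := by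
  have stable (i : Fin d) := F.comp_stable (α i)
  have energy := matrixBound_energyWeight_of_isStableMatrix F.eig_nonneg stable c
  have mass := matrixBound_one_of_isStableMatrix F.eig_nonneg stable c
  simp only [F.aForm_tensorSpline_self hm, F.l2normSqD_tensorSpline hm]
  rw [mul_add, mul_left_comm]
  exact add_le_add energy (mul_le_mul_of_nonneg_left mass ht)

theorem l2normSqD_le_of_aForm_orth (hm : 0 < m) {c : (Fin d → Fin F.card) → ℝ}
    (orth : ∀ w ∈ TensorSplineCoarse d m p, aForm d (F.tensorSpline d c) w = 0) :
    (m : ℝ) ^ 2 * l2normSqD d (F.tensorSpline d c) ≤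
      4 * d ^ 2 * 26 ^ d * aForm d (F.tensorSpline d c) (F.tensorSpline d c) := by
  have nitsche := weightedSq_one_le_of_orth (c := c) (energyWeight_pos F.eig_nonneg)
    (by positivity)
    (matrixBound_one_sub_tensorMatrix F.eig_nonneg F.coarse_stable F.coarse_approx) fun y => by
      rw [← orth _ (F.tensorSpline_coarseMatrix_mem y), F.aForm_tensorSpline hm, coarseMatrix]
  rw [F.l2normSqD_tensorSpline hm, F.aForm_tensorSpline_self hm]
  calc (m : ℝ) ^ 2 * weightedSq 1 c
      ≤ (m : ℝ) ^ 2 * (d ^ 2 * (26 ^ d * (2 / m) ^ 2) * weightedSq (energyWeight d F.eig) c) := by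
        gcongr
    _ = 4 * d ^ 2 * 26 ^ d * weightedSq (energyWeight d F.eig) c := by
        field_simp
        ring

theorem aForm_sub_le_of_isGalerkinCoarseProj (hm : 0 < m) {c y : (Fin d → Fin F.card) → ℝ}
    (hy : IsGalerkinCoarseProj d m p (F.tensorSpline d c) (F.tensorSpline d y)) :
    aForm d (F.tensorSpline d (c - y)) (F.tensorSpline d (c - y)) ≤
      aForm d (F.tensorSpline d c) (F.tensorSpline d c) := by
  have orth := hy.2 _ hy.1
  rw [← map_sub, F.aForm_tensorSpline hm] at orth
  simpa only [F.aForm_tensorSpline_self hm] using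
    weightedSq_sub_le_of_orth (fun k => (energyWeight_pos F.eig_nonneg k).le) orth

end SplineFrame

theorem aForm_add_l2normSqD_proj_galerkin_error_le {d m p : ℕ} (hm : m % 2 = 0) (hm2 : 2 ≤ m)
    (hp : 1 ≤ p) {v w z : (Fin d → ℝ) → ℝ} (hv : v ∈ TensorSpline d m p)
    (hw : IsGalerkinCoarseProj d m p v w) {α : Fin d → Bool}
    (hz : IsL2ProjSub d m p α (v - w) z) :
    aForm d z z + (m : ℝ) ^ 2 * l2normSqD d z ≤
      26 ^ d * (1 + 4 * d ^ 2 * 26 ^ d) * aForm d v v := by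
  have hm0 : 0 < m := by omega
  obtain ⟨F⟩ := nonempty_splineFrame hm hm2 hp
  obtain ⟨c, rfl⟩ := F.exists_tensorSpline_eq hv
  obtain ⟨y, rfl⟩ := F.exists_tensorSpline_eq (tensorSplineCoarse_le hm hw.1)
  have galerkin_orth := hw.2
  rw [← map_sub] at hz galerkin_orth
  rw [F.eq_tensorSpline_of_isL2ProjSub hm0 hz]
  set e := F.tensorSpline d (c - y)
  calc _ ≤ 26 ^ d * (aForm d e e + (m : ℝ) ^ 2 * l2normSqD d e) :=
        F.aForm_add_l2normSqD_compMatrix_le hm0 α _ (sq_nonneg _)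
    _ ≤ 26 ^ d * (aForm d e e + 4 * d ^ 2 * 26 ^ d * aForm d e e) := by
        gcongr 26 ^ d * (aForm d e e + ?_)
        exact F.l2normSqD_le_of_aForm_orth hm0 galerkin_orth
    _ = 26 ^ d * (1 + 4 * d ^ 2 * 26 ^ d) * aForm d e e := by ring
    _ ≤ _ := by
        gcongr
        exact F.aForm_sub_le_of_isGalerkinCoarseProj hm0 hw

theorem approximation_property_subspace_correction_general {d m p : ℕ} {c₁ : ℝ} (hc₁ : 0 ≤ c₁)
    (hm : m % 2 = 0) (hm2 : 2 ≤ m) (hp : 1 ≤ p) {φ : (Fin d → Bool) → ((Fin d → ℝ) → ℝ) → ℝ}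
    (hφ : ∀ α, ∀ u ∈ TensorSplineSub d m p α,
      φ α u ≤ c₁ * (aForm d u u + (m : ℝ) ^ 2 * l2normSqD d u))
    {v w : (Fin d → ℝ) → ℝ} (hv : v ∈ TensorSpline d m p) (hw : IsGalerkinCoarseProj d m p v w)
    {z : (Fin d → Bool) → (Fin d → ℝ) → ℝ} (hz : ∀ α, IsL2ProjSub d m p α (v - w) (z α)) :
    ∑ α, φ α (z α) ≤ 2 ^ d * (c₁ * (26 ^ d * (1 + 4 * d ^ 2 * 26 ^ d))) * aForm d v v := by
  have component (α : Fin d → Bool) :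
      φ α (z α) ≤ c₁ * (26 ^ d * (1 + 4 * d ^ 2 * 26 ^ d) * aForm d v v) :=
    (hφ α _ (hz α).1).trans <| mul_le_mul_of_nonneg_left
      (aForm_add_l2normSqD_proj_galerkin_error_le hm hm2 hp hv hw (hz α)) hc₁
  refine (Finset.sum_le_card_nsmul _ _ _ fun α _ => component α).trans_eq ?_
  simp only [Finset.card_univ, Fintype.card_fun, Fintype.card_bool, Fintype.card_fin,
    nsmul_eq_mul, Nat.cast_pow, Nat.cast_ofNat]
  ring

/-- Lemma `lem:approx-prop`: if for every `α ∈ {0,1}^d` the local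
smoother `L_α` (given through its bilinear form `b α` on `S_α`, symmetric and
positive definite) satisfies `⟨L_α v_α, v_α⟩ ≤ c₁·⟨(A + h⁻²M^d)v_α, v_α⟩` for all
`v_α ∈ S_α`, then the additive subspace correction smoother `L = Σ_α Q_α′ L_α Q_α`
satisfies `‖(I − T_c)v‖_L ≤ c·‖v‖_A` for all `v ∈ S^d` (stated in squared form:
`Σ_α ⟨L_α Q_α(v − T_c v), Q_α(v − T_c v)⟩ ≤ c·a(v,v)`), where `T_c` is the
`a(·,·)`-orthogonal projector onto `(S_c)^d` and `c` is independent of `h` and `p`. -/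
theorem approximation_property_subspace_correction :
    ∀ d : ℕ, 1 ≤ d → ∀ c₁ : ℝ, 0 < c₁ → ∃ c : ℝ, 0 < c ∧
      ∀ m p : ℕ, m % 2 = 0 → 2 ≤ m → 1 ≤ p →
      ∀ b : (Fin d → Bool) → ((Fin d → ℝ) → ℝ) → ((Fin d → ℝ) → ℝ) → ℝ,
        (∀ α, ∀ u ∈ TensorSplineSub d m p α, ∀ v ∈ TensorSplineSub d m p α,
          b α u v = b α v u) →
        (∀ α, ∀ u ∈ TensorSplineSub d m p α, l2normSqD d u ≠ 0 → 0 < b α u u) →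
        (∀ α, ∀ u ∈ TensorSplineSub d m p α,
          b α u u ≤ c₁ * (aForm d u u + (m : ℝ) ^ 2 * l2normSqD d u)) →
        ∀ v : (Fin d → ℝ) → ℝ, v ∈ TensorSpline d m p →
        ∀ w : (Fin d → ℝ) → ℝ, IsGalerkinCoarseProj d m p v w →
        ∀ z : (Fin d → Bool) → (Fin d → ℝ) → ℝ,
          (∀ α, IsL2ProjSub d m p α (v - w) (z α)) →
          ∑ α : Fin d → Bool, b α (z α) (z α) ≤ c * aForm d v v := by
  intro d _ c₁ hc₁
  refine ⟨2 ^ d * (c₁ * (26 ^ d * (1 + 4 * d ^ 2 * 26 ^ d))), by positivity, ?_⟩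
  intro m p hm hm2 hp b _ _ hb v hv w hw z hz
  exact approximation_property_subspace_correction_general (φ := fun α u => b α u u)
    hc₁.le hm hm2 hp hb hv hw hz

end SplineMG
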